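/- arXiv:1406.3978 — 4 statements merged into one kernel-verified Lean document; each statement's English description precedes it below -/
import Mathlib

section
/- Let p be a prime number, let F be a finite-dimensional field extension of the p-adic numbers ℚ_p, and let E be a field extension of F of degree 2. Then for all units a, b ∈ F^×, there exist x, y, z ∈ E, not all zero, such that a·x² + b·y² = z². (Equivalently, the quadratic Hilbert symbol (a,b)_E of the local field E is trivial for all a, b ∈ F^×.) -/
/-!
An anisotropic quadratic form `Q` over a local field `F` makes `√‖Q v‖` an ultrametric norm. In
dimension at least three, choosing successive vectors nearest to the span of the previous ones
yields three vectors, pairwise orthogonal for this norm, and two of them have values of `Q` whose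
valuations have the same parity. After scaling, these span a plane on which `Q` is a multiple of
`X ^ 2 - t * X * Y + n * Y ^ 2`, where `X ^ 2 - t * X + n` is integral and irreducible over the
residue field. If `[E : F] = e * f` is even, then either the residue degree `f` is even and the
polynomial acquires a root in `E`, or the ramification index `e` is even and the values in `F`
become units times squares, all of which the binary form represents over `E`. In both cases `Q`
becomes isotropic over `E`; the theorem is the case of `a * x ^ 2 + b * y ^ 2 - z ^ 2`.
-/

section FiniteField

variable {k : Type*} [Field k] [Finite k] {t n : k}

theorem discrim_ne_zero_of_forall_quadratic_ne_zero (h : ∀ c : k, c ^ 2 - t * c + n ≠ 0) :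
    t ^ 2 - 4 * n ≠ 0 := by
  intro hd
  by_cases h2 : ringChar k = 2
  · obtain ⟨s, hs⟩ := FiniteField.isSquare_of_char_two h2 n
    have : CharP k 2 := ringChar.of_eq h2
    have two_eq_zero : (2 : k) = 0 := CharTwo.two_eq_zero
    have ht : t = 0 := pow_eq_zero_iff two_ne_zero |>.1 <| by
      linear_combination hd + 2 * n * two_eq_zero
    exact h s (by rw [ht, hs]; linear_combination s ^ 2 * two_eq_zero)
  · have : (2 : k) ≠ 0 := Ring.two_ne_zero h2
    apply h (t / 2)
    field_simp
    linear_combination -hd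

open Polynomial in
theorem exists_binary_form_eq (hd : t ^ 2 - 4 * n ≠ 0) (u : k) :
    ∃ x y : k, x ^ 2 - t * x * y + n * y ^ 2 = u := by
  have := Fintype.ofFinite k
  by_cases h2 : ringChar k = 2
  · obtain ⟨s, hs⟩ := FiniteField.isSquare_of_char_two h2 u
    exact ⟨s, 0, by rw [hs]; ring⟩
  · have two_ne : (2 : k) ≠ 0 := Ring.two_ne_zero h2
    have hlead : n - (t / 2) ^ 2 ≠ 0 := fun h => hd (by field_simp at h; linear_combination -h)
    obtain ⟨x, y, hxy⟩ := FiniteField.exists_root_sum_quadratic (R := k)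
      (f := X ^ 2) (g := C (n - (t / 2) ^ 2) * X ^ 2 + C 0 * X + C (-u))
      (degree_X_pow 2) (degree_quadratic hlead) (FiniteField.odd_card_of_char_ne_two h2)
    simp only [eval_pow, eval_X, eval_add, eval_mul, eval_C] at hxy
    refine ⟨x + t / 2 * y, y, ?_⟩
    linear_combination (norm := (field_simp; ring)) hxy

variable {k' : Type*} [Field k'] [Finite k'] [Algebra k k']

open Polynomial in
theorem exists_aeval_eq_zero_of_natDegree_dvd_finrank {f : k[X]} (hf : Irreducible f)
    (hdvd : f.natDegree ∣ Module.finrank k k') : ∃ r : k', aeval r f = 0 := by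
  have : Fact (Irreducible f) := ⟨hf⟩
  have hfin : Module.finrank k (AdjoinRoot f) = f.natDegree := by
    rw [(AdjoinRoot.powerBasis hf.ne_zero).finrank, AdjoinRoot.powerBasis_dim]
  have : Module.Finite k (AdjoinRoot f) := (AdjoinRoot.powerBasis hf.ne_zero).finite
  have : Finite (AdjoinRoot f) := Module.finite_of_finite k
  obtain ⟨φ⟩ := FiniteField.nonempty_algHom_of_finrank_dvd (F := k) (K := AdjoinRoot f) (L := k')
    (hfin ▸ hdvd)
  exact ⟨φ (AdjoinRoot.root f), by
    rw [aeval_algHom_apply, AdjoinRoot.aeval_eq, AdjoinRoot.mk_self, map_zero]⟩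

open Polynomial in
theorem exists_quadratic_eq_zero_of_even_finrank (h : ∀ c : k, c ^ 2 - t * c + n ≠ 0)
    (heven : Even (Module.finrank k k')) :
    ∃ r : k', r ^ 2 - algebraMap k k' t * r + algebraMap k k' n = 0 := by
  have hmonic : (X ^ 2 - C t * X + C n).Monic := by monicity!
  have hdeg : (X ^ 2 - C t * X + C n).natDegree = 2 := by compute_degree!
  have hirr : Irreducible (X ^ 2 - C t * X + C n) := by
    rw [hmonic.irreducible_iff_roots_eq_zero_of_degree_le_three hdeg.ge (by lia)]
    refine Multiset.eq_zero_of_forall_notMem fun c hc => h c ?_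
    simpa using isRoot_of_mem_roots hc
  obtain ⟨r, hr⟩ := exists_aeval_eq_zero_of_natDegree_dvd_finrank (k' := k') hirr
    (by rw [hdeg]; exact heven.two_dvd)
  exact ⟨r, by simpa using hr⟩

end FiniteField

section Henselian

open IsLocalRing

variable {R : Type*} [CommRing R] [HenselianLocalRing R]

open Polynomial in
theorem exists_quadratic_eq_zero_of_residue {t n a : R}
    (ha : residue R (a ^ 2 - t * a + n) = 0) (ha' : IsUnit (2 * a - t)) :
    ∃ r : R, r ^ 2 - t * r + n = 0 := by
  have heval : (X ^ 2 - C t * X + C n).eval a ∈ maximalIdeal R := by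
    simpa only [← residue_eq_zero_iff, eval_add, eval_sub, eval_pow, eval_mul, eval_X, eval_C]
  obtain ⟨r, hr, -⟩ := HenselianLocalRing.is_henselian (X ^ 2 - C t * X + C n) (by monicity!) a
    heval (by simpa [derivative_pow] using ha')
  exact ⟨r, by simpa using hr⟩

theorem exists_binary_form_eq_of_isUnit [Finite (ResidueField R)] {t n u : R}
    (hn : IsUnit n) (hd : IsUnit (t ^ 2 - 4 * n)) (hu : IsUnit u) :
    ∃ x y : R, x ^ 2 - t * x * y + n * y ^ 2 = u := by
  obtain ⟨x', y', hxy'⟩ := exists_binary_form_eq (t := residue R t) (n := residue R n)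
    (by simpa [map_ofNat] using (hd.map (residue R)).ne_zero) (residue R u)
  obtain ⟨x, rfl⟩ := residue_surjective x'
  obtain ⟨y, rfl⟩ := residue_surjective y'
  have hxy : residue R (x ^ 2 - t * x * y + n * y ^ 2 - u) = 0 := by
    simpa [sub_eq_zero] using hxy'
  by_cases hx : IsUnit (2 * x - t * y)
  · obtain ⟨r, hr⟩ := exists_quadratic_eq_zero_of_residue (t := t * y) (n := n * y ^ 2 - u)
      (a := x) (by rw [← hxy]; congr 1; ring) hx
    exact ⟨r, y, by linear_combination hr⟩
  by_cases hy : IsUnit (2 * n * y - t * x)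
  · obtain ⟨n, rfl⟩ := hn
    have hn' : (n : R) * ↑n⁻¹ = 1 := n.mul_inv
    obtain ⟨r, hr⟩ := exists_quadratic_eq_zero_of_residue (t := ↑n⁻¹ * t * x)
      (n := ↑n⁻¹ * (x ^ 2 - u)) (a := y)
      (by
        rw [← mul_zero (residue R ↑n⁻¹), ← hxy, ← map_mul]
        congr 1
        linear_combination -y ^ 2 * hn')
      (by
        convert (n⁻¹).isUnit.mul hy using 1
        linear_combination -2 * y * hn')
    exact ⟨x, r, by linear_combination (t * x * r - x ^ 2 + u) * hn' + n * hr⟩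
  rw [← mem_nonunits_iff, ← mem_maximalIdeal, ← residue_eq_zero_iff] at hx hy
  refine absurd ((hd.mul hu).map (residue R)).ne_zero (not_not.2 ?_)
  -- Both partial derivatives vanish modulo the maximal ideal, hence so does `(t ^ 2 - 4 * n) * u`,
  -- by Euler's relation.
  have heuler : (t ^ 2 - 4 * n) * u = -(2 * n * x - t * n * y) * (2 * x - t * y)
      - (t * x - t ^ 2 * y + 2 * n * y) * (2 * n * y - t * x)
      - (t ^ 2 - 4 * n) * (x ^ 2 - t * x * y + n * y ^ 2 - u) := by ring
  rw [heuler, map_sub, map_sub, map_mul, map_mul _ _ (2 * n * y - t * x),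
    map_mul _ (t ^ 2 - 4 * n), hx, hy, hxy]
  simp only [mul_zero, sub_zero]

end Henselian

section RamificationInertia

open IsLocalRing Module

variable {R S : Type*} [CommRing R] [IsDomain R] [IsDiscreteValuationRing R]
  [CommRing S] [IsDomain S] [IsDiscreteValuationRing S]
  [Algebra R S] [IsTorsionFree R S]

theorem associated_algebraMap_pow_ramificationIdx [IsLocalHom (algebraMap R S)] {ϖ : R} {π : S}
    (hϖ : Irreducible ϖ) (hπ : Irreducible π) :
    Associated (algebraMap R S ϖ) (π ^ (maximalIdeal S).ramificationIdx R) := by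
  have hne : algebraMap R S ϖ ≠ 0 := by simpa using hϖ.ne_zero
  obtain ⟨e, he⟩ := IsDiscreteValuationRing.associated_pow_irreducible hne hπ
  have hmap : (maximalIdeal R).map (algebraMap R S) = maximalIdeal S ^ e := by
    rw [hϖ.maximalIdeal_eq, hπ.maximalIdeal_eq, Ideal.map_span, Set.image_singleton,
      Ideal.span_singleton_pow, Ideal.span_singleton_eq_span_singleton.2 he]
  have hmax : maximalIdeal S ≠ ⊥ := IsDiscreteValuationRing.not_a_field S
  rwa [Ideal.IsDedekindDomain.ramificationIdx_eq_multiplicity (maximalIdeal R) (maximalIdeal S)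
      (hmap ▸ pow_ne_zero e hmax), hmap,
    multiplicity_pow_self_of_prime (Ideal.prime_of_isPrime hmax inferInstance)]

theorem exists_associated_sq_algebraMap [IsLocalHom (algebraMap R S)]
    (he : Even ((maximalIdeal S).ramificationIdx R)) {r : R} (hr : r ≠ 0) :
    ∃ s : S, Associated (s ^ 2) (algebraMap R S r) := by
  obtain ⟨ϖ, hϖ⟩ := IsDiscreteValuationRing.exists_irreducible R
  obtain ⟨π, hπ⟩ := IsDiscreteValuationRing.exists_irreducible S
  obtain ⟨m, hm⟩ := IsDiscreteValuationRing.associated_pow_irreducible hr hϖ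
  obtain ⟨d, hd⟩ := he
  refine ⟨(π ^ d) ^ m, ?_⟩
  calc ((π ^ d) ^ m) ^ 2 = (π ^ (maximalIdeal S).ramificationIdx R) ^ m := by rw [hd]; ring
    Associated _ (algebraMap R S ϖ ^ m) :=
      (associated_algebraMap_pow_ramificationIdx hϖ hπ).symm.pow_pow
    Associated _ (algebraMap R S r) := by simpa using (hm.map (algebraMap R S)).symm

variable (R S) in
theorem ramificationIdx_mul_finrank_residueField [IsLocalHom (algebraMap R S)] [Module.Finite R S] :
    (maximalIdeal S).ramificationIdx R * finrank (ResidueField R) (ResidueField S) =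
      finrank R S := by
  have hover : (maximalIdeal R).primesOver S = {maximalIdeal S} :=
    primesOver_eq S (IsDiscreteValuationRing.not_a_field R)
  let _ : Unique ((maximalIdeal R).primesOver S) := (Equiv.setCongr hover).unique
  have hdefault : (default : (maximalIdeal R).primesOver S).1 = maximalIdeal S :=
    hover.le (default : (maximalIdeal R).primesOver S).2
  rw [← Ideal.sum_ramification_inertia_eq_finrank (maximalIdeal R) S, Fintype.sum_unique,
    hdefault, Ideal.inertiaDeg_eq_of_isMaximal (maximalIdeal R)]
  rfl

theorem exists_quadratic_eq_zero_or_forall_exists_binary_form_eq_of_isDiscreteValuationRing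
    [IsLocalHom (algebraMap R S)] [Module.Finite R S] [HenselianLocalRing S]
    [Finite (ResidueField R)] [Finite (ResidueField S)]
    (heven : Even (finrank R S)) {t n : R}
    (h : ∀ c : ResidueField R, c ^ 2 - residue R t * c + residue R n ≠ 0) :
    (∃ r : S, r ^ 2 - algebraMap R S t * r + algebraMap R S n = 0) ∨
      ∀ c : R, ∃ x y : S,
        x ^ 2 - algebraMap R S t * x * y + algebraMap R S n * y ^ 2 = algebraMap R S c := by
  have hn : IsUnit n := by
    rw [← residue_ne_zero_iff_isUnit]
    simpa using h 0
  have hd : IsUnit (t ^ 2 - 4 * n) := by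
    rw [← residue_ne_zero_iff_isUnit]
    simpa [map_ofNat] using discrim_ne_zero_of_forall_quadratic_ne_zero h
  rw [← ramificationIdx_mul_finrank_residueField, Nat.even_mul] at heven
  rcases heven with he | hf
  · right
    intro c
    rcases eq_or_ne c 0 with rfl | hc
    · exact ⟨0, 0, by simp⟩
    obtain ⟨s, u, hu⟩ := exists_associated_sq_algebraMap (S := S) he hc
    obtain ⟨x, y, hxy⟩ := exists_binary_form_eq_of_isUnit (hn.map (algebraMap R S))
      (by simpa [map_ofNat] using hd.map (algebraMap R S)) u.isUnit
    exact ⟨s * x, s * y, by rw [← hu, ← hxy]; ring⟩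
  · left
    obtain ⟨r, hr⟩ := exists_quadratic_eq_zero_of_even_finrank h hf
    obtain ⟨a, rfl⟩ := residue_surjective r
    refine exists_quadratic_eq_zero_of_residue (by simpa using hr) (a := a) ?_
    rw [← residue_ne_zero_iff_isUnit]
    have hdisc := ((hd.map (algebraMap R S)).map (residue S)).ne_zero
    contrapose hdisc
    simp only [map_sub, map_mul, map_pow, map_ofNat, ResidueField.algebraMap_residue] at hr hdisc ⊢
    linear_combination (2 * residue S a - residue S (algebraMap R S t)) * hdisc - 4 * hr

end RamificationInertia

section CompactLocalRing

open IsLocalRing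

variable (R : Type*) [CommRing R] [IsLocalRing R] [IsNoetherianRing R]
  [TopologicalSpace R] [IsTopologicalRing R] [CompactSpace R] [T2Space R]

theorem isAdic_maximalIdeal_of_compactSpace : IsAdic (maximalIdeal R) := by
  rw [isAdic_iff]
  refine ⟨isOpen_maximalIdeal_pow R, fun s hs => ?_⟩
  have hclosed (n : ℕ) : IsClosed ((maximalIdeal R ^ n : Ideal R) : Set R) :=
    (Ideal.isCompact_of_fg (IsNoetherian.noetherian _)).isClosed
  refine exists_subset_nhds_of_isCompact'
    (Antitone.directed_ge fun m n hmn => Ideal.pow_le_pow_right hmn)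
    (fun n => (hclosed n).isCompact) hclosed fun x hx => ?_
  have hkrull := Ideal.iInf_pow_eq_bot_of_isLocalRing (maximalIdeal R)
    (maximalIdeal.isMaximal R).ne_top
  have : x ∈ (⨅ n : ℕ, maximalIdeal R ^ n : Ideal R) := by simpa [Ideal.mem_iInf] using hx
  rw [hkrull, Ideal.mem_bot] at this
  rwa [this]

theorem henselianLocalRing_of_compactSpace : HenselianLocalRing R := by
  let _ := IsTopologicalAddGroup.rightUniformSpace R
  have := isUniformAddGroup_of_addCommGroup (G := R)
  have : IsAdicComplete (maximalIdeal R) R :=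
    (isAdic_maximalIdeal_of_compactSpace R).isAdicComplete_iff.2 ⟨inferInstance, inferInstance⟩
  exact ⟨fun f hf a ha hfa =>
    HenselianRing.is_henselian f hf a ha (hfa.map (Ideal.Quotient.mk (maximalIdeal R)))⟩

end CompactLocalRing

section LocalField

open NormedField Valued

variable (K : Type*) [NontriviallyNormedField K] [IsUltrametricDist K]

variable {K} in
theorem residue_integer_eq_zero_iff (x : 𝒪[K]) :
    IsLocalRing.residue 𝒪[K] x = 0 ↔ ‖x‖ < 1 := by
  rw [IsLocalRing.residue_eq_zero_iff, IsLocalRing.mem_maximalIdeal, mem_nonunits_iff,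
    Valued.integer.isUnit_iff_norm_eq_one]
  exact (Valued.integer.norm_le_one x).lt_iff_ne.symm

variable [ProperSpace K]

instance compactSpace_integer : CompactSpace 𝒪[K] := by
  refine isCompact_iff_compactSpace.1 (?_ : IsCompact (𝒪[K] : Set K))
  convert isCompact_closedBall (0 : K) 1 using 1
  ext x
  simp [Valued.integer.mem_iff]

instance isDiscreteValuationRing_integer : IsDiscreteValuationRing 𝒪[K] :=
  have : (Valued.v : Valuation K NNReal).IsNontrivial :=
    inferInstanceAs (NormedField.valuation (K := K)).IsNontrivial
  Valued.integer.isDiscreteValuationRing_of_compactSpace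

instance henselianLocalRing_integer : HenselianLocalRing 𝒪[K] :=
  henselianLocalRing_of_compactSpace 𝒪[K]

end LocalField

section LocalFieldExtension

open NormedField Valued

variable (F E : Type*) [NontriviallyNormedField F] [IsUltrametricDist F]
  [NontriviallyNormedField E] [IsUltrametricDist E] [NormedAlgebra F E]

instance hasExtension_valued :
    Valuation.HasExtension (Valued.v : Valuation F NNReal) (Valued.v : Valuation E NNReal) where
  val_isEquiv_comap := by
    rw [Valuation.isEquiv_iff_val_le_one]
    intro x
    change ‖x‖₊ ≤ 1 ↔ ‖algebraMap F E x‖₊ ≤ 1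
    rw [nnnorm_algebraMap']

theorem finrank_integer : Module.finrank 𝒪[F] 𝒪[E] = Module.finrank F E := by
  have := (Valuation.integer.integers (Valued.v : Valuation F NNReal)).isFractionRing
  have := (Valuation.integer.integers (Valued.v : Valuation E NNReal)).isFractionRing
  exact (IsFractionRing.finrank_eq 𝒪[F] F 𝒪[E] E).symm

theorem moduleFinite_integer [ProperSpace F] [FiniteDimensional F E] :
    Module.Finite 𝒪[F] 𝒪[E] := by
  let coord := (Module.finBasis F E).equivFunL
  let coordL : E →L[F] Fin (Module.finrank F E) → F := coord
  obtain ⟨c, hc⟩ := NormedField.exists_lt_norm F ‖coordL‖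
  have hc0 : c ≠ 0 := norm_pos_iff.1 ((norm_nonneg _).trans_lt hc)
  have hbound (x : 𝒪[E]) (i) : ‖c⁻¹ * coord x i‖ ≤ 1 := by
    rw [norm_mul, norm_inv, inv_mul_le_one₀ (norm_pos_iff.2 hc0)]
    calc ‖coord x i‖ ≤ ‖coordL x‖ := norm_le_pi_norm (coord x) i
      _ ≤ ‖coordL‖ := coordL.unit_le_opNorm (x : E) (Valued.integer.norm_le_one x)
      _ ≤ ‖c‖ := hc.le
  let scaledCoord : 𝒪[E] →ₗ[𝒪[F]] (Fin (Module.finrank F E) → 𝒪[F]) :=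
    { toFun x i := ⟨c⁻¹ * coord x i, Valued.integer.mem_iff.2 (hbound x i)⟩
      map_add' x y := by ext i; simp [mul_add]
      map_smul' r x := by
        ext i
        simp [Valuation.HasExtension.val_smul, mul_left_comm] }
  refine Module.Finite.of_injective scaledCoord fun x y hxy => ?_
  have : coord x = coord y := by
    ext i
    simpa [scaledCoord, hc0] using congrArg (fun f => (f i : F)) hxy
  exact Subtype.ext (coord.injective this)

end LocalFieldExtension

section EvenDegree

open NormedField Valued IsLocalRing

variable (F E : Type*) [NontriviallyNormedField F] [IsUltrametricDist F] [ProperSpace F]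
  [Field E] [Algebra F E] [FiniteDimensional F E]

theorem exists_quadratic_eq_zero_or_forall_exists_binary_form_eq
    (heven : Even (Module.finrank F E)) {t n : 𝒪[F]}
    (h : ∀ c : 𝓀[F], c ^ 2 - residue 𝒪[F] t * c + residue 𝒪[F] n ≠ 0) :
    (∃ r : E, r ^ 2 - algebraMap F E t * r + algebraMap F E n = 0) ∨
      ∀ c : F, ∃ x y : E,
        x ^ 2 - algebraMap F E t * x * y + algebraMap F E n * y ^ 2 = algebraMap F E c := by
  let _ : NontriviallyNormedField E := spectralNorm.nontriviallyNormedField F E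
  let _ : NormedAlgebra F E := spectralNorm.normedAlgebra F E
  have : IsUltrametricDist E := IsUltrametricDist.isUltrametricDist_of_isNonarchimedean_norm
    (isNonarchimedean_spectralNorm (K := F) (L := E))
  have : ProperSpace E := FiniteDimensional.proper F E
  have := moduleFinite_integer F E
  rw [← finrank_integer F E] at heven
  have hcoe (x y : 𝒪[E]) (h : x = y) : (x : E) = y := congrArg _ h
  rcases exists_quadratic_eq_zero_or_forall_exists_binary_form_eq_of_isDiscreteValuationRing
    heven h with ⟨r, hr⟩ | huniv
  · exact .inl ⟨r, by simpa using hcoe _ _ hr⟩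
  · refine .inr fun c => ?_
    rcases le_total ‖c‖ 1 with hc | hc
    · obtain ⟨x, y, hxy⟩ := huniv ⟨c, Valued.integer.mem_iff.2 hc⟩
      exact ⟨x, y, by simpa using hcoe _ _ hxy⟩
    · have : algebraMap F E c ≠ 0 := by simpa using norm_pos_iff.1 (one_pos.trans_le hc)
      obtain ⟨x, y, hxy⟩ := huniv ⟨c⁻¹, Valued.integer.mem_iff.2 (by
        rw [norm_inv]; exact inv_le_one_of_one_le₀ hc)⟩
      refine ⟨algebraMap F E c * x, algebraMap F E c * y, ?_⟩
      have hxy' : (x : E) ^ 2 - algebraMap F E t * x * y + algebraMap F E n * (y : E) ^ 2 =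
          (algebraMap F E c)⁻¹ := by simpa using hcoe _ _ hxy
      linear_combination (norm := (field_simp; ring)) algebraMap F E c ^ 2 * hxy'

end EvenDegree

section AnisotropicForm

open NormedField Valued QuadraticMap

variable {F V : Type*} [NontriviallyNormedField F] [IsUltrametricDist F] [ProperSpace F]
  [AddCommGroup V] [Module F V] {Q : QuadraticForm F V}

theorem norm_polar_sq_le (hQ : Q.Anisotropic) (x y : V) :
    ‖polar Q x y‖ ^ 2 ≤ ‖Q x‖ * ‖Q y‖ := by
  by_contra! hlt
  have hB : polar Q x y ≠ 0 := by
    rw [← norm_ne_zero_iff, ← pow_ne_zero_iff two_ne_zero]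
    exact ((by positivity : 0 ≤ ‖Q x‖ * ‖Q y‖).trans_lt hlt).ne'
  have hQx : Q x ≠ 0 := fun h => hB (by rw [hQ x h, polar_zero_left])
  have hn : ‖Q x * Q y / polar Q x y ^ 2‖ < 1 := by
    rw [norm_div, norm_mul, norm_pow]
    exact (div_lt_one (by positivity)).2 hlt
  -- Hensel's lemma gives a root of `X ^ 2 + X + n`, so that some `a • x + y` is isotropic.
  let n : 𝒪[F] := ⟨Q x * Q y / polar Q x y ^ 2, Valued.integer.mem_iff.2 hn.le⟩
  have hres : IsLocalRing.residue 𝒪[F] n = 0 := (residue_integer_eq_zero_iff n).2 hn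
  obtain ⟨r, hr⟩ := exists_quadratic_eq_zero_of_residue (t := -1) (n := n) (a := 0)
    (by simpa using hres) (by simp)
  have hrF : (r : F) ^ 2 + r + Q x * Q y / polar Q x y ^ 2 = 0 := by
    simpa [n] using congrArg (Subtype.val : 𝒪[F] → F) hr
  have hzero : (polar Q x y * r / Q x) • x + y = 0 := by
    apply hQ
    rw [QuadraticMap.map_add Q, QuadraticMap.map_smul, polar_smul_left, smul_eq_mul, smul_eq_mul]
    linear_combination (norm := (field_simp; ring)) (polar Q x y ^ 2 / Q x) * hrF
  have hdouble : 2 * r + 1 = 0 := by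
    have : polar Q x y = -(polar Q x y * r / Q x) * (2 * Q x) := by
      conv_lhs => rw [eq_neg_of_add_eq_zero_right hzero, ← neg_smul, polar_smul_right, polar_self]
      simp
    field_simp at this
    refine Subtype.ext ?_
    change (2 : F) * r + 1 = 0
    linear_combination this
  have hunit : IsUnit n := .of_mul_eq_one 4 (by linear_combination 4 * hr - (2 * r + 1) * hdouble)
  exact (hunit.map (IsLocalRing.residue 𝒪[F])).ne_zero hres

theorem norm_add_le_max_of_anisotropic (hQ : Q.Anisotropic) (x y : V) :
    ‖Q (x + y)‖ ≤ max ‖Q x‖ ‖Q y‖ := by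
  have hpolar : ‖polar Q x y‖ ≤ max ‖Q x‖ ‖Q y‖ := by
    refine le_of_sq_le_sq ((norm_polar_sq_le hQ x y).trans ?_) (le_max_of_le_left (norm_nonneg _))
    rw [pow_two]
    gcongr
    exacts [le_max_left _ _, le_max_right _ _]
  rw [QuadraticMap.map_add Q]
  exact (IsUltrametricDist.norm_add_le_max _ _).trans
    (max_le (IsUltrametricDist.norm_add_le_max _ _) hpolar)

theorem normedSpaceCore_of_anisotropic (hQ : Q.Anisotropic) :
    let _ : Norm V := ⟨fun v => √‖Q v‖⟩
    NormedSpace.Core F V :=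
  let _ : Norm V := ⟨fun v => √‖Q v‖⟩
  { norm_nonneg v := Real.sqrt_nonneg _
    norm_smul c v := by
      change √‖Q (c • v)‖ = ‖c‖ * √‖Q v‖
      rw [QuadraticMap.map_smul, smul_eq_mul, norm_mul, norm_mul,
        Real.sqrt_mul (by positivity), Real.sqrt_mul_self (norm_nonneg c)]
    norm_triangle x y := by
      refine (Real.sqrt_le_sqrt (norm_add_le_max_of_anisotropic hQ x y)).trans ?_
      rw [Real.sqrt_monotone.map_max]
      exact max_le_add_of_nonneg (Real.sqrt_nonneg _) (Real.sqrt_nonneg _)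
    norm_eq_zero_iff v := by
      change √‖Q v‖ = 0 ↔ v = 0
      rw [Real.sqrt_eq_zero (norm_nonneg _), norm_eq_zero, hQ.eq_zero_iff] }

end AnisotropicForm

theorem exists_notMem_forall_norm_le_norm_sub {F V : Type*} [NontriviallyNormedField F]
    [ProperSpace F] [NormedAddCommGroup V] [NormedSpace F V] [FiniteDimensional F V]
    {L : Submodule F V} (hL : L ≠ ⊤) : ∃ v ∉ L, ∀ l ∈ L, ‖v‖ ≤ ‖v - l‖ := by
  have := FiniteDimensional.proper F V
  obtain ⟨w, hw⟩ := SetLike.exists_not_mem_of_ne_top L hL rfl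
  obtain ⟨y, hy, hdist⟩ :=
    L.closed_of_finiteDimensional.exists_infDist_eq_dist ⟨0, L.zero_mem⟩ w
  refine ⟨w - y, fun h => hw (by simpa using L.add_mem h hy), fun l hl => ?_⟩
  rw [← dist_eq_norm, ← hdist, sub_sub, ← dist_eq_norm]
  exact Metric.infDist_le_dist_of_mem (L.add_mem hy hl)

open NormedField Valued in
theorem exists_lt_norm_eq_sq_mul {F ι : Type*} [NontriviallyNormedField F] [IsUltrametricDist F]
    [ProperSpace F] [LinearOrder ι] [Fintype ι] (hι : 2 < Fintype.card ι) {x : ι → F}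
    (hx : ∀ i, x i ≠ 0) :
    ∃ i j, i < j ∧ ∃ c : F, c ≠ 0 ∧ ‖x i‖ = ‖c‖ ^ 2 * ‖x j‖ := by
  obtain ⟨ϖ, hϖ⟩ := IsDiscreteValuationRing.exists_irreducible 𝒪[F]
  have hϖ0 : (ϖ : F) ≠ 0 := by simpa using hϖ.ne_zero
  have hzpow (i) : ∃ k : ℤ, ‖x i‖ = ‖(ϖ : F)‖ ^ k := by
    have := (Valuation.integer.integers (Valued.v : Valuation F NNReal)).isFractionRing
    obtain ⟨k, u, hu⟩ :=
      IsDiscreteValuationRing.exists_units_eq_smul_zpow_of_irreducible hϖ (hx i)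
    have hu1 : ‖algebraMap 𝒪[F] F u‖ = 1 := Valued.integer.norm_coe_unit u
    refine ⟨k, ?_⟩
    rw [hu, Units.smul_def, Algebra.smul_def, norm_mul, norm_zpow, hu1, one_mul]
    rfl
  choose k hk using hzpow
  obtain ⟨i, j, hij, hkij⟩ : ∃ i j, i < j ∧ (k i : ZMod 2) = k j := by
    obtain ⟨i, j, hne, h⟩ := Fintype.exists_ne_map_eq_of_card_lt
      (fun i => (k i : ZMod 2)) (by simpa using hι)
    rcases hne.lt_or_gt with hlt | hlt
    exacts [⟨i, j, hlt, h⟩, ⟨j, i, hlt, h.symm⟩]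
  obtain ⟨m, hm⟩ := (ZMod.intCast_eq_intCast_iff_dvd_sub _ _ 2).1 hkij.symm
  refine ⟨i, j, hij, (ϖ : F) ^ m, zpow_ne_zero m hϖ0, ?_⟩
  rw [hk, hk, norm_zpow, ← zpow_natCast, ← zpow_mul, ← zpow_add₀ (norm_ne_zero_iff.2 hϖ0)]
  congr 1
  push_cast at hm ⊢
  lia

section OrthogonalFamily

open QuadraticMap

variable {F V : Type*} [NontriviallyNormedField F] [IsUltrametricDist F] [ProperSpace F]
  [AddCommGroup V] [Module F V] [FiniteDimensional F V] {Q : QuadraticForm F V}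

theorem exists_notMem_forall_norm_apply_le (hQ : Q.Anisotropic) {L : Submodule F V} (hL : L ≠ ⊤) :
    ∃ v ∉ L, ∀ l ∈ L, ‖Q v‖ ≤ ‖Q (v - l)‖ := by
  let _ : Norm V := ⟨fun v => √‖Q v‖⟩
  let _ := NormedAddCommGroup.ofCore (normedSpaceCore_of_anisotropic hQ)
  let _ := NormedSpace.ofCore (normedSpaceCore_of_anisotropic hQ)
  obtain ⟨v, hv, hmin⟩ := exists_notMem_forall_norm_le_norm_sub hL
  exact ⟨v, hv, fun l hl => (Real.sqrt_le_sqrt_iff (norm_nonneg _)).1 (hmin l hl)⟩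

theorem exists_forall_lt_forall_norm_apply_le (hQ : Q.Anisotropic) {m : ℕ}
    (hm : m ≤ Module.finrank F V) :
    ∃ e : Fin m → V, (∀ i, e i ≠ 0) ∧
      ∀ i j, i < j → ∀ a : F, ‖Q (e j)‖ ≤ ‖Q (e j - a • e i)‖ := by
  induction m with
  | zero => exact ⟨Fin.elim0, fun i => i.elim0, fun i => i.elim0⟩
  | succ m ih =>
    obtain ⟨e, hne, hmin⟩ := ih (by lia)
    have hspan : Submodule.span F (Set.range e) ≠ ⊤ := by
      intro htop
      have := finrank_range_le_card (R := F) (b := e)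
      rw [Set.finrank, htop, finrank_top, Fintype.card_fin] at this
      lia
    obtain ⟨v, hv, hvmin⟩ := exists_notMem_forall_norm_apply_le hQ hspan
    refine ⟨Fin.snoc e v, fun i => ?_, fun i j hij a => ?_⟩
    · cases i using Fin.lastCases with
      | last => simpa using fun h : v = 0 => hv (h ▸ zero_mem _)
      | cast i => simpa using hne i
    · have hi : i ≠ Fin.last m := (hij.trans_le (Fin.le_last j)).ne
      obtain ⟨i, rfl⟩ := Fin.exists_castSucc_eq.2 hi
      cases j using Fin.lastCases with
      | last =>
        simpa using hvmin _ (Submodule.smul_mem _ a (Submodule.subset_span ⟨i, rfl⟩))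
      | cast j => simpa using hmin i j (Fin.castSucc_lt_castSucc_iff.1 hij) a

end OrthogonalFamily

section Plane

open QuadraticMap

theorem polar_map_eq_algebraMap_polar {K E V W : Type*} [Field K] [Field E] [Algebra K E]
    [AddCommGroup V] [Module K V] [AddCommGroup W] [Module E W] {Q : QuadraticForm K V}
    {Q' : QuadraticForm E W} {ι : V →+ W} (hι : ∀ v, Q' (ι v) = algebraMap K E (Q v)) (u w : V) :
    polar Q' (ι u) (ι w) = algebraMap K E (polar Q u w) := by
  simp only [polar, ← map_add, hι, map_sub]

/-- The vectors `l` and `v` of the quadratic space `(V, Q)` satisfy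
`Q (X • l - Y • v) = Q l * (X ^ 2 - t * X * Y + n * Y ^ 2)`, a nonzero multiple of the norm
form of `K[X] / (X ^ 2 - t * X + n)`: solving the quadratic equation, or representing prescribed
values by the norm form, then produces isotropic vectors of `Q`. -/
structure IsScaledNormPlane {K V : Type*} [Field K] [AddCommGroup V] [Module K V]
    (Q : QuadraticForm K V) (l v : V) (t n : K) : Prop where
  apply_ne_zero : Q l ≠ 0
  polar_eq : polar Q l v = t * Q l
  apply_eq : Q v = n * Q l

namespace IsScaledNormPlane

variable {K V : Type*} [Field K] [AddCommGroup V] [Module K V] {Q : QuadraticForm K V}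
  {l v w : V} {t n : K}

theorem apply_smul_sub_smul_add (h : IsScaledNormPlane Q l v t n) (hl : polar Q l w = 0)
    (hv : polar Q v w = 0) (x y : K) :
    Q (x • l - y • v + w) = Q l * (x ^ 2 - t * x * y + n * y ^ 2) + Q w := by
  rw [sub_eq_add_neg, ← neg_smul, QuadraticMap.map_add Q, QuadraticMap.map_add Q]
  simp only [QuadraticMap.map_smul, polar_add_left, polar_smul_left, polar_smul_right, smul_eq_mul,
    hl, hv, h.polar_eq, h.apply_eq]
  ring

theorem eq_zero_of_smul_sub_smul_add_eq_zero (h : IsScaledNormPlane Q l v t n)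
    (hdisc : t ^ 2 - 4 * n ≠ 0) (hl : polar Q l w = 0) (hv : polar Q v w = 0) {x y : K}
    (hzero : x • l - y • v + w = 0) : x = 0 ∧ y = 0 := by
  have hpolar (u : V) : x * polar Q l u - y * polar Q v u + polar Q w u = 0 := by
    simpa [polar_add_left, polar_sub_left, polar_smul_left] using congrArg (polar Q · u) hzero
  have hpl : Q l * (2 * x - t * y) = 0 := by
    have := hpolar l
    rw [polar_self, polar_comm Q v, h.polar_eq, polar_comm Q w, hl, nsmul_eq_mul] at this
    push_cast at this
    linear_combination this
  have hpv : Q l * (t * x - 2 * n * y) = 0 := by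
    have := hpolar v
    rw [polar_self, h.polar_eq, polar_comm Q w, hv, nsmul_eq_mul, h.apply_eq] at this
    push_cast at this
    linear_combination this
  have hl' := (mul_eq_zero_iff_left h.apply_ne_zero).1 hpl
  have hv' := (mul_eq_zero_iff_left h.apply_ne_zero).1 hpv
  constructor <;> refine (mul_eq_zero_iff_left hdisc).1 ?_
  · linear_combination -2 * n * hl' + t * hv'
  · linear_combination -t * hl' + 2 * hv'

theorem map {E W : Type*} [Field E] [Algebra K E] [AddCommGroup W] [Module E W]
    {Q' : QuadraticForm E W} {ι : V →+ W} (hι : ∀ v, Q' (ι v) = algebraMap K E (Q v))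
    (h : IsScaledNormPlane Q l v t n) :
    IsScaledNormPlane Q' (ι l) (ι v) (algebraMap K E t) (algebraMap K E n) where
  apply_ne_zero := by simpa [hι] using h.apply_ne_zero
  polar_eq := by rw [polar_map_eq_algebraMap_polar hι, hι, h.polar_eq, map_mul]
  apply_eq := by rw [hι, hι, h.apply_eq, map_mul]

end IsScaledNormPlane

theorem exists_ne_zero_polar_eq_zero {K V : Type*} [Field K] [AddCommGroup V] [Module K V]
    (Q : QuadraticForm K V) (hV : 3 ≤ Module.finrank K V) (l v : V) :
    ∃ w ≠ 0, polar Q l w = 0 ∧ polar Q v w = 0 := by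
  have : FiniteDimensional K V := Module.finite_of_finrank_pos (by lia)
  obtain ⟨w, hw, hne⟩ := Submodule.exists_mem_ne_zero_of_ne_bot <|
    LinearMap.ker_ne_bot_of_finrank_lt (f := (Q.polarBilin l).prod (Q.polarBilin v))
      (by simpa [Nat.lt_iff_add_one_le] using hV)
  exact ⟨w, hne, by simpa using hw⟩

end Plane

section Isotropy

open NormedField Valued QuadraticMap IsLocalRing

variable {F V : Type*} [NontriviallyNormedField F] [IsUltrametricDist F] [ProperSpace F]
  [AddCommGroup V] [Module F V] {Q : QuadraticForm F V}

theorem exists_norm_apply_eq_forall_norm_apply_le (hQ : Q.Anisotropic)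
    (hV : 3 ≤ Module.finrank F V) :
    ∃ l v : V, l ≠ 0 ∧ ‖Q v‖ = ‖Q l‖ ∧ ∀ a : F, ‖Q v‖ ≤ ‖Q (v - a • l)‖ := by
  have : FiniteDimensional F V := Module.finite_of_finrank_pos (by lia)
  obtain ⟨e, hne, hmin⟩ := exists_forall_lt_forall_norm_apply_le hQ hV
  obtain ⟨i, j, hij, c, hc, hnorm⟩ :=
    exists_lt_norm_eq_sq_mul (by simp) fun i h => hne i (hQ _ h)
  refine ⟨e i, c • e j, hne i, ?_, fun a => ?_⟩
  · rw [QuadraticMap.map_smul, smul_eq_mul, norm_mul, norm_mul, hnorm, pow_two]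
  · have hfactor : c • e j - a • e i = c • (e j - (c⁻¹ * a) • e i) := by
      rw [smul_sub, smul_smul, mul_inv_cancel_left₀ hc]
    rw [hfactor, QuadraticMap.map_smul, QuadraticMap.map_smul, norm_smul, norm_smul]
    gcongr
    exact hmin i j hij _

theorem exists_isScaledNormPlane_forall_quadratic_ne_zero (hQ : Q.Anisotropic)
    (hV : 3 ≤ Module.finrank F V) :
    ∃ (l v : V) (t n : 𝒪[F]), IsScaledNormPlane Q l v t n ∧
      ∀ c : 𝓀[F], c ^ 2 - residue 𝒪[F] t * c + residue 𝒪[F] n ≠ 0 := by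
  obtain ⟨l, v, hl, hnorm, hmin⟩ := exists_norm_apply_eq_forall_norm_apply_le hQ hV
  have hQl : Q l ≠ 0 := fun h => hl (hQ l h)
  have hpos : 0 < ‖Q l‖ := norm_pos_iff.2 hQl
  have ht : ‖polar Q l v / Q l‖ ≤ 1 := by
    rw [norm_div, div_le_one hpos]
    refine le_of_sq_le_sq ((norm_polar_sq_le hQ l v).trans_eq ?_) hpos.le
    rw [hnorm, pow_two]
  have hn : ‖Q v / Q l‖ ≤ 1 := by rw [norm_div, hnorm, div_self hpos.ne']
  have hplane : IsScaledNormPlane Q l v (polar Q l v / Q l) (Q v / Q l) :=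
    ⟨hQl, (div_mul_cancel₀ _ hQl).symm, (div_mul_cancel₀ _ hQl).symm⟩
  refine ⟨l, v, ⟨_, Valued.integer.mem_iff.2 ht⟩, ⟨_, Valued.integer.mem_iff.2 hn⟩, hplane, ?_⟩
  intro x'
  obtain ⟨x, rfl⟩ := residue_surjective x'
  rw [← map_pow, ← map_mul, ← map_sub, ← map_add, Ne, residue_integer_eq_zero_iff, not_lt]
  refine (le_mul_iff_one_le_right hpos).1 ?_
  have hval := hplane.apply_smul_sub_smul_add (w := 0) (by simp) (by simp) x 1
  rw [add_zero, one_smul, QuadraticMap.map_zero, add_zero, mul_one, one_pow, mul_one] at hval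
  calc ‖Q l‖ ≤ ‖Q (v - (x : F) • l)‖ := hnorm ▸ hmin x
    _ = _ := by rw [← neg_sub, QuadraticMap.map_neg, hval, norm_mul]; rfl

theorem not_anisotropic_of_even_finrank {E W : Type*} [Field E] [Algebra F E]
    [FiniteDimensional F E] (heven : Even (Module.finrank F E)) (hV : 3 ≤ Module.finrank F V)
    [AddCommGroup W] [Module E W] {Q' : QuadraticForm E W} {ι : V →+ W}
    (hinj : Function.Injective ι) (hι : ∀ v, Q' (ι v) = algebraMap F E (Q v)) :
    ¬Q'.Anisotropic := by
  intro hQ'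
  have hQ : Q.Anisotropic := fun v hv =>
    (map_eq_zero_iff ι hinj).1 (hQ' _ (by rw [hι, hv, map_zero]))
  obtain ⟨l, v, t, n, hplane, hirr⟩ := exists_isScaledNormPlane_forall_quadratic_ne_zero hQ hV
  have hdisc : algebraMap F E t ^ 2 - 4 * algebraMap F E n ≠ 0 := by
    have hres := discrim_ne_zero_of_forall_quadratic_ne_zero hirr
    contrapose hres
    have hF : (t : F) ^ 2 - 4 * n = 0 :=
      (algebraMap F E).injective (by simpa [map_ofNat] using hres)
    have : t ^ 2 - 4 * n = 0 := Subtype.ext hF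
    simpa [map_ofNat] using congrArg (residue 𝒪[F]) this
  have hplane' := hplane.map hι
  rcases exists_quadratic_eq_zero_or_forall_exists_binary_form_eq F E heven hirr
    with ⟨r, hr⟩ | huniv
  · have hvec : r • ι l - (1 : E) • ι v + 0 = 0 := hQ' _ <| by
      rw [hplane'.apply_smul_sub_smul_add (by simp) (by simp), QuadraticMap.map_zero]
      linear_combination Q' (ι l) * hr
    exact one_ne_zero
      (hplane'.eq_zero_of_smul_sub_smul_add_eq_zero hdisc (by simp) (by simp) hvec).2
  · obtain ⟨w, hw, hlw, hvw⟩ := exists_ne_zero_polar_eq_zero Q hV l v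
    have hpolar (u : V) (hu : polar Q u w = 0) : polar Q' (ι u) (ι w) = 0 := by
      rw [polar_map_eq_algebraMap_polar hι, hu, map_zero]
    obtain ⟨x, y, hxy⟩ := huniv (-Q w / Q l)
    have hvec : x • ι l - y • ι v + ι w = 0 := hQ' _ <| by
      rw [hplane'.apply_smul_sub_smul_add (hpolar l hlw) (hpolar v hvw), hxy, hι, hι, ← map_mul,
        mul_div_cancel₀ _ hplane.apply_ne_zero, map_neg, neg_add_cancel]
    obtain ⟨rfl, rfl⟩ :=
      hplane'.eq_zero_of_smul_sub_smul_add_eq_zero hdisc (hpolar l hlw) (hpolar v hvw) hvec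
    exact hw ((map_eq_zero_iff ι hinj).1 (by simpa using hvec))

end Isotropy

open QuadraticMap in
theorem hilbertSymbol_trivial_of_base_units_general {F E : Type*} [NontriviallyNormedField F]
    [IsUltrametricDist F] [ProperSpace F] [Field E] [Algebra F E] [FiniteDimensional F E]
    (hE : Even (Module.finrank F E)) (a b : F) :
    ∃ x y z : E, ¬(x = 0 ∧ y = 0 ∧ z = 0) ∧
      algebraMap F E a * x ^ 2 + algebraMap F E b * y ^ 2 = z ^ 2 := by
  have hisotropic := not_anisotropic_of_even_finrank (V := Fin 3 → F) (W := Fin 3 → E)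
    (Q := weightedSumSquares F ![a, b, -1])
    (Q' := weightedSumSquares E (algebraMap F E ∘ ![a, b, -1]))
    (ι := (algebraMap F E : F →+ E).compLeft (Fin 3)) hE (by simp)
    ((algebraMap F E).injective.comp_left) (fun v => by simp [weightedSumSquares_apply])
  obtain ⟨v, hv, hne⟩ := (not_anisotropic_iff_exists _).1 hisotropic
  refine ⟨v 0, v 1, v 2, fun ⟨h0, h1, h2⟩ => hv ?_, ?_⟩
  · ext i
    fin_cases i <;> assumption
  · have hsum : algebraMap F E a * v 0 ^ 2 + algebraMap F E b * v 1 ^ 2 - v 2 ^ 2 = 0 := by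
      simpa [weightedSumSquares_apply, Fin.sum_univ_three, pow_two, sub_eq_add_neg] using hne
    exact sub_eq_zero.1 hsum

/-- Let `F` be a finite extension of `ℚ_p` and `E/F` a quadratic extension. Then for all
units `a, b` of `F`, the equation `a·x² + b·y² = z²` has a nonzero solution over `E`;
equivalently, the quadratic Hilbert symbol `(a, b)_E` is trivial for all `a, b ∈ Fˣ`. -/
theorem hilbertSymbol_trivial_of_base_units (p : ℕ) [Fact p.Prime]
    (F E : Type) [Field F] [Algebra ℚ_[p] F] [FiniteDimensional ℚ_[p] F]
    [Field E] [Algebra F E] (hE : Module.finrank F E = 2) (a b : Fˣ) :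
    ∃ x y z : E, ¬(x = 0 ∧ y = 0 ∧ z = 0) ∧
      algebraMap F E (a : F) * x ^ 2 + algebraMap F E (b : F) * y ^ 2 = z ^ 2 := by
  let _ : NontriviallyNormedField F := spectralNorm.nontriviallyNormedField ℚ_[p] F
  let _ : NormedAlgebra ℚ_[p] F := spectralNorm.normedAlgebra ℚ_[p] F
  have : IsUltrametricDist F := IsUltrametricDist.isUltrametricDist_of_isNonarchimedean_norm
    (isNonarchimedean_spectralNorm (K := ℚ_[p]) (L := F))
  have : ProperSpace F := FiniteDimensional.proper ℚ_[p] F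
  have : FiniteDimensional F E := Module.finite_of_finrank_pos (by lia)
  exact hilbertSymbol_trivial_of_base_units_general (hE ▸ even_two) (a : F) b
end

section
/- Let p be an odd prime, n a positive integer, q = p^n, and let k be a finite field with q² elements. Let G = k^× ⋊ ℤ be the semidirect product in which m ∈ ℤ acts on k^× by the m-th power of the automorphism x ↦ x^q. Then the second group cohomology H²(G, ℤ/2ℤ), with ℤ/2ℤ a trivial G-module, is isomorphic as an abelian group to ℤ/2ℤ × ℤ/2ℤ. -/
open groupCohomology

noncomputable section

/-!
Let `C` be cyclic of order `N`, generated by `a`, and let `σ a = a ^ q`. The group `C ⋊ ℤ` has the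
presentation `⟨a, t ∣ a ^ N = 1, t * a = a ^ q * t⟩`, so the central extension attached to a
2-cocycle `f` splits as soon as the lifts `(a, 0)` and `(t, 0)` satisfy the two relators. Their
failure to do so is measured by two elements of the coefficient group which depend linearly on `f`.
On the coboundary of `c` these are `N • c a` and `(1 - q) • c a`; both vanish in `ZMod d` when
`d ∣ N` and `q ≡ 1` modulo `d`, and hence `H²` embeds in `ZMod d × ZMod d`.

Both coordinates are attained. The cup product of the characters dual to `t` and `a` has obstruction
`(0, 1)`. The discrete logarithm of the `C`-component is a crossed homomorphism to `ZMod N` with `t`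
acting as multiplication by `q`, and its Bockstein for
`0 → ZMod d → ZMod (d * N) → ZMod N → 0` has first obstruction `1`.
-/

universe u

theorem sum_range_coboundary_pow {G M : Type*} [Group G] [AddCommGroup M]
    (c : G → M) (a : G) (n : ℕ) :
    ∑ i ∈ Finset.range n, (c a - c (a ^ i * a) + c (a ^ i)) = n • c a + c 1 - c (a ^ n) := by
  have telescope := Finset.sum_range_sub' (fun i ↦ c (a ^ i)) n
  simp only [pow_succ, pow_zero] at telescope
  simp only [sub_add_eq_add_sub, add_sub_assoc, Finset.sum_add_distrib, telescope,
    Finset.sum_const, Finset.card_range]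

theorem map_zpow_smul {G H α β : Type*} [Group G] [Group H] [MulAction G α] [MulAction H β]
    {f : α → β} {g : G} {h : H} (hf : ∀ x, f (g • x) = h • f x) (m : ℤ) (x : α) :
    f (g ^ m • x) = h ^ m • f x := by
  induction m generalizing x with
  | zero => simp
  | succ m ih => rw [zpow_add_one, zpow_add_one, mul_smul, mul_smul, ih, hf]
  | pred m ih =>
    have hinv : f (g⁻¹ • x) = h⁻¹ • f x := by rw [eq_inv_smul_iff, ← hf, smul_inv_smul]
    rw [zpow_sub_one, zpow_sub_one, mul_smul, mul_smul, ih, hinv]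

theorem coprime_card_of_map_generator {C : Type*} [Group C] [Finite C] {σ : MulAut C} {a : C}
    {q : ℕ} (ha : ∀ x, x ∈ Subgroup.zpowers a) (hσ : σ a = a ^ q) :
    q.Coprime (Nat.card C) := by
  have horder : orderOf a = orderOf a / (orderOf a).gcd q := by
    rw [← orderOf_pow, ← hσ, MulEquiv.orderOf_eq]
  have hgcd : (orderOf a).gcd q = 1 :=
    (Nat.div_eq_self.1 horder.symm).resolve_left (orderOf_pos a).ne'
  rwa [← orderOf_eq_card_of_forall_mem_zpowers ha, Nat.coprime_comm]

section ZModSequence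

/-- Multiplication by `N` as a map `ZMod d → ZMod (d * N)`, with cokernel `ZMod N`. -/
def zmodMulHom (d N : ℕ) : ZMod d →+ ZMod (d * N) :=
  ZMod.lift d ⟨(AddMonoidHom.mulRight (N : ZMod (d * N))).comp (Int.castAddHom _), by
    simp [← Nat.cast_mul, -CharP.cast_eq_zero, ZMod.natCast_self]⟩

theorem zmodMulHom_intCast (d N : ℕ) (x : ℤ) : zmodMulHom d N x = x * N :=
  ZMod.lift_coe ..

theorem zmodMulHom_injective (d : ℕ) {N : ℕ} (hN : N ≠ 0) :
    Function.Injective (zmodMulHom d N) := by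
  refine (ZMod.lift_injective _).2 fun x hx ↦ ?_
  have hx : ((x * N : ℤ) : ZMod (d * N)) = 0 := by rwa [Int.cast_mul, Int.cast_natCast]
  rw [ZMod.intCast_zmod_eq_zero_iff_dvd, Nat.cast_mul] at hx
  rw [ZMod.intCast_zmod_eq_zero_iff_dvd]
  exact Int.dvd_of_mul_dvd_mul_right (mod_cast hN) hx

theorem mem_range_zmodMulHom {d N : ℕ} {z : ZMod (d * N)} :
    z ∈ (zmodMulHom d N).range ↔ ZMod.castHom (dvd_mul_left N d) (ZMod N) z = 0 := by
  obtain ⟨z, rfl⟩ := ZMod.intCast_surjective z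
  rw [map_intCast, ZMod.intCast_zmod_eq_zero_iff_dvd]
  constructor
  · rintro ⟨x, hx⟩
    obtain ⟨x, rfl⟩ := ZMod.intCast_surjective x
    have := congrArg (ZMod.castHom (dvd_mul_left N d) (ZMod N)) hx
    rw [zmodMulHom_intCast] at this
    simpa [← ZMod.intCast_zmod_eq_zero_iff_dvd] using this.symm
  · rintro ⟨x, rfl⟩
    exact ⟨x, by rw [zmodMulHom_intCast]; push_cast; ring⟩

theorem nsmul_eq_zmodMulHom_one {d N : ℕ} (hd : d ∣ N) {z : ZMod (d * N)}
    (hz : ZMod.castHom (dvd_mul_left N d) (ZMod N) z = 1) : N • z = zmodMulHom d N 1 := by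
  obtain ⟨x, hx⟩ := (mem_range_zmodMulHom (z := z - 1)).2 (by rw [map_sub, hz, map_one, sub_self])
  have hker : N • (z - 1) = 0 := by
    rw [← hx, ← map_nsmul, nsmul_eq_mul, (ZMod.natCast_eq_zero_iff N d).2 hd, zero_mul, map_zero]
  have hone : zmodMulHom d N 1 = N • 1 := by
    simpa using zmodMulHom_intCast d N 1
  rw [hone, ← sub_eq_zero, ← nsmul_sub, hker]

end ZModSequence

section TrivialCoefficients

variable {R G A : Type u} [CommRing R] [Group G] [AddCommGroup A] [Module R A]

theorem mem_cocycles₂_trivial_iff {f : G × G → A} :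
    f ∈ cocycles₂ (Rep.trivial R G A) ↔
      ∀ g h j, f (g * h, j) + f (g, h) = f (h, j) + f (g, h * j) :=
  mem_cocycles₂_iff (A := Rep.trivial R G A) f

theorem cocycles₂_trivial_mul (f : cocycles₂ (Rep.trivial R G A)) (g h j : G) :
    (f (g * h, j) + f (g, h) : A) = f (h, j) + f (g, h * j) :=
  mem_cocycles₂_trivial_iff.1 f.2 g h j

theorem mem_coboundaries₂_trivial_iff (f : cocycles₂ (Rep.trivial R G A)) :
    ⇑f ∈ coboundaries₂ (Rep.trivial R G A) ↔
      ∃ c : G → A, ∀ g h, (f (g, h) : A) = c h - c (g * h) + c g :=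
  exists_congr fun _ ↦ ⟨fun hc g h ↦ (congrFun hc (g, h)).symm, fun hc ↦
    funext fun x ↦ (hc x.1 x.2).symm⟩

/-- The central extension of `G` by `A` attached to a 2-cocycle `f`: the set `G × A` with
multiplication `(g, x) (h, y) = (g h, x + y + f (g, h))`. As `f` is not assumed normalized, the
identity is `(1, -f (1, 1))`. -/
@[ext]
structure CocycleExtension (f : cocycles₂ (Rep.trivial R G A)) where
  base : G
  fiber : A

namespace CocycleExtension

variable {f : cocycles₂ (Rep.trivial R G A)}

instance : Mul (CocycleExtension f) :=
  ⟨fun x y ↦ ⟨x.base * y.base, x.fiber + y.fiber + f (x.base, y.base)⟩⟩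

instance : One (CocycleExtension f) := ⟨⟨1, -f (1, 1)⟩⟩

instance : Inv (CocycleExtension f) :=
  ⟨fun x ↦ ⟨x.base⁻¹, -x.fiber - f (x.base⁻¹, x.base) - f (1, 1)⟩⟩

@[simp] theorem base_mul (x y : CocycleExtension f) : (x * y).base = x.base * y.base := rfl

@[simp] theorem fiber_mul (x y : CocycleExtension f) :
    (x * y).fiber = x.fiber + y.fiber + f (x.base, y.base) := rfl

@[simp] theorem base_one : (1 : CocycleExtension f).base = 1 := rfl

@[simp] theorem fiber_one : (1 : CocycleExtension f).fiber = -f (1, 1) := rfl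

@[simp] theorem base_inv (x : CocycleExtension f) : x⁻¹.base = x.base⁻¹ := rfl

@[simp] theorem fiber_inv (x : CocycleExtension f) :
    x⁻¹.fiber = -x.fiber - f (x.base⁻¹, x.base) - f (1, 1) := rfl

instance : Group (CocycleExtension f) :=
  Group.ofLeftAxioms
    (fun x y z ↦ by
      ext
      · simp [mul_assoc]
      · have := cocycles₂_trivial_mul f x.base y.base z.base
        simp only [fiber_mul, base_mul]
        grind)
    (fun x ↦ by
      ext
      · simp
      · have : (f (1, x.base) : A) = f (1, 1) := cocycles₂_map_one_fst f x.base
        simp [this])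
    (fun x ↦ by
      ext
      · simp
      · simp only [fiber_mul, fiber_inv, base_inv, fiber_one]
        abel)

/-- The projection of the central extension onto its quotient `G`. -/
def baseHom : CocycleExtension f →* G where
  toFun := base
  map_one' := rfl
  map_mul' _ _ := rfl

@[simp] theorem baseHom_apply (x : CocycleExtension f) : baseHom x = x.base := rfl

theorem mem_coboundaries₂_of_rightInverse {s : G →* CocycleExtension f}
    (hs : Function.RightInverse s baseHom) : ⇑f ∈ coboundaries₂ (Rep.trivial R G A) := by
  refine (mem_coboundaries₂_trivial_iff f).2 ⟨fun g ↦ -(s g).fiber, fun g h ↦ ?_⟩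
  have hbase (g) : (s g).base = g := hs g
  have hfiber := congrArg fiber (map_mul s g h)
  rw [fiber_mul, hbase, hbase] at hfiber
  grind

end CocycleExtension

/-- Evaluation of 2-cocycles at the pair `(g, h)`. -/
def cocycleEval (g h : G) : cocycles₂ (Rep.trivial R G A) →ₗ[R] A :=
  LinearMap.proj (g, h) ∘ₗ Submodule.subtype _

/-- When `a ^ n = 1`, the failure of the lift `(a, 0)` to `CocycleExtension f` to satisfy the same
relation, as a linear function of the cocycle `f`. -/
def powObstruction (n : ℕ) (a : G) : cocycles₂ (Rep.trivial R G A) →ₗ[R] A :=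
  ∑ i ∈ Finset.range n, cocycleEval (a ^ i) a

/-- When `t * a = a ^ q * t`, the failure of the lifts `(a, 0)` and `(t, 0)` to
`CocycleExtension f` to satisfy the same relation, as a linear function of the cocycle `f`. The
term at `(1, 1)` comes from the fiber of `(a, 0) ^ q`, namely `powObstruction q a f - f (1, 1)`. -/
def conjObstruction (q : ℕ) (a t : G) : cocycles₂ (Rep.trivial R G A) →ₗ[R] A :=
  cocycleEval t a + cocycleEval 1 1 - powObstruction q a - cocycleEval (a ^ q) t

theorem powObstruction_apply (n : ℕ) (a : G) (f : cocycles₂ (Rep.trivial R G A)) :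
    powObstruction n a f = ∑ i ∈ Finset.range n, (f (a ^ i, a) : A) :=
  LinearMap.sum_apply ..

theorem conjObstruction_apply (q : ℕ) (a t : G) (f : cocycles₂ (Rep.trivial R G A)) :
    conjObstruction q a t f =
      (f (t, a) + f (1, 1) - ∑ i ∈ Finset.range q, f (a ^ i, a) - f (a ^ q, t) : A) := by
  rw [← powObstruction_apply]
  rfl

theorem powObstruction_of_coboundary {a : G} {n : ℕ} (ha : a ^ n = 1)
    {f : cocycles₂ (Rep.trivial R G A)} {c : G → A}
    (hf : ∀ g h, (f (g, h) : A) = c h - c (g * h) + c g) :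
    powObstruction n a f = n • c a := by
  rw [powObstruction_apply]
  simp only [hf]
  rw [sum_range_coboundary_pow, ha, add_sub_cancel_right]

theorem conjObstruction_of_coboundary {q : ℕ} {a t : G} (hta : t * a = a ^ q * t)
    {f : cocycles₂ (Rep.trivial R G A)} {c : G → A}
    (hf : ∀ g h, (f (g, h) : A) = c h - c (g * h) + c g) :
    conjObstruction q a t f = c a - q • c a := by
  rw [conjObstruction_apply]
  simp only [hf, sum_range_coboundary_pow, hta, mul_one]
  abel

namespace CocycleExtension

variable {f : cocycles₂ (Rep.trivial R G A)}

theorem mk_zero_pow (a : G) (n : ℕ) :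
    (⟨a, 0⟩ : CocycleExtension f) ^ n = ⟨a ^ n, powObstruction n a f - f (1, 1)⟩ := by
  induction n with
  | zero => ext <;> simp [powObstruction_apply]
  | succ n ih =>
    rw [pow_succ, ih]
    ext
    · simp [pow_succ]
    · simp only [fiber_mul, powObstruction_apply, Finset.sum_range_succ]
      abel

theorem mk_zero_pow_eq_one {a : G} {n : ℕ} (ha : a ^ n = 1) (hf : powObstruction n a f = 0) :
    (⟨a, 0⟩ : CocycleExtension f) ^ n = 1 := by
  rw [mk_zero_pow, ha, hf, zero_sub]
  rfl

theorem mk_zero_mul_mk_zero {q : ℕ} {a t : G} (hta : t * a = a ^ q * t)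
    (hf : conjObstruction q a t f = 0) :
    (⟨t, 0⟩ * ⟨a, 0⟩ : CocycleExtension f) = ⟨a, 0⟩ ^ q * ⟨t, 0⟩ := by
  rw [conjObstruction_apply, ← powObstruction_apply] at hf
  rw [mk_zero_pow]
  ext
  · exact hta
  · simp only [fiber_mul]
    grind

end CocycleExtension

theorem exists_cocycle₂_cup {S : Type u} [NonUnitalNonAssocRing S] [Module R S]
    (α β : G →* Multiplicative S) :
    ∃ f : cocycles₂ (Rep.trivial R G S), ∀ g h, f (g, h) = (α g).toAdd * (β h).toAdd := by
  refine ⟨⟨fun x ↦ (α x.1).toAdd * (β x.2).toAdd, ?_⟩, fun _ _ ↦ rfl⟩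
  refine mem_cocycles₂_trivial_iff.2 fun g h j ↦ ?_
  simp only [map_mul, toAdd_mul, add_mul, mul_add]
  abel

/-- Here `e` is a set-theoretic lift to `M` of a crossed homomorphism with values in `M ⧸ ι A`. -/
theorem exists_cocycle₂_bockstein {H M : Type*} [Monoid H] [AddCommGroup M]
    [DistribMulAction H M] (χ : G →* H) {ι : A →+ M} (hι : Function.Injective ι)
    (hχ : ∀ g x, χ g • ι x = ι x) {e : G → M}
    (he : ∀ g h, χ g • e h - e (g * h) + e g ∈ ι.range) :
    ∃ f : cocycles₂ (Rep.trivial R G A), ∀ g h, ι (f (g, h)) = χ g • e h - e (g * h) + e g := by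
  choose f hf using he
  refine ⟨⟨fun x ↦ f x.1 x.2, mem_cocycles₂_trivial_iff.2 fun g h j ↦ hι ?_⟩, hf⟩
  calc ι (f (g * h) j + f g h)
      = χ g • ι (f h j) + ι (f g (h * j)) := by
        rw [map_add, hf, hf, hf, hf, smul_add, smul_sub, map_mul, mul_smul, mul_assoc]
        abel
    _ = ι (f h j + f g (h * j)) := by rw [hχ, map_add]

/-- The identification of `H²` with a module `V` obtained from a surjection of the 2-cocycles onto
`V` whose kernel consists of the 2-coboundaries. -/
def h2EquivOfSurjective {B : Rep.{u} R G} {V : Type*} [AddCommGroup V] [Module R V]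
    (φ : cocycles₂ B →ₗ[R] V) (hφ : Function.Surjective φ)
    (hker : ∀ f, φ f = 0 ↔ ⇑f ∈ coboundaries₂ B) : H2 B ≃ₗ[R] V :=
  have hπ : Function.Surjective (H2π B).hom := (ModuleCat.epi_iff_surjective _).1 inferInstance
  have hker' : LinearMap.ker (H2π B).hom = LinearMap.ker φ :=
    Submodule.ext fun f ↦ (H2π_eq_zero_iff f).trans (hker f).symm
  ((LinearMap.quotKerEquivOfSurjective _ hπ).symm.trans (Submodule.quotEquivOfEq _ _ hker')).trans
    (φ.quotKerEquivOfSurjective hφ)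

end TrivialCoefficients

/-- The group `C ⋊ ℤ` in which `1 : ℤ` acts on `C` by `σ`; for `C = π₁ X` and `σ` induced by a
self-homeomorphism of `X`, this is the fundamental group of the mapping torus. -/
abbrev MappingTorus {C : Type*} [Group C] (σ : MulAut C) : Type _ :=
  C ⋊[zpowersHom (MulAut C) σ] Multiplicative ℤ

namespace MappingTorus

section Presentation

variable {C E : Type*} [Group C] [Group E] {σ : MulAut C} {a : C} {q : ℕ}

/-- The inclusion of the normal subgroup `C`. -/
def ofFiber (σ : MulAut C) : C →* MappingTorus σ := SemidirectProduct.inl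

/-- The generator of `ℤ`, which acts on `C` as `σ`: the stable letter of the HNN extension. -/
def stable (σ : MulAut C) : MappingTorus σ := SemidirectProduct.inr (Multiplicative.ofAdd 1)

theorem ofFiber_pow_card (x : C) : ofFiber σ x ^ Nat.card C = 1 := by
  rw [← map_pow, pow_card_eq_one', map_one]

theorem stable_mul_ofFiber (x : C) : stable σ * ofFiber σ x = ofFiber σ (σ x) * stable σ := by
  ext <;> simp [stable, ofFiber]

theorem stable_mul_ofFiber_pow (hσ : σ a = a ^ q) :
    stable σ * ofFiber σ a = ofFiber σ a ^ q * stable σ := by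
  rw [stable_mul_ofFiber, hσ, map_pow]

theorem hom_ext (ha : ∀ x, x ∈ Subgroup.zpowers a) {f g : MappingTorus σ →* E}
    (hfiber : f (ofFiber σ a) = g (ofFiber σ a)) (hstable : f (stable σ) = g (stable σ)) :
    f = g := by
  refine SemidirectProduct.hom_ext (MonoidHom.ext fun x ↦ ?_) (MonoidHom.ext_mint hstable)
  obtain ⟨i, rfl⟩ := ha x
  rw [map_zpow, map_zpow]
  exact congrArg (· ^ i) hfiber

theorem exists_hom (ha : ∀ x, x ∈ Subgroup.zpowers a) (hσ : σ a = a ^ q) {b s : E}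
    (hb : b ^ Nat.card C = 1) (hsb : s * b = b ^ q * s) :
    ∃ f : MappingTorus σ →* E, f (ofFiber σ a) = b ∧ f (stable σ) = s := by
  rw [← orderOf_eq_card_of_forall_mem_zpowers ha] at hb
  let F : C →* E := monoidHomOfForallMemZpowers ha (orderOf_dvd_of_pow_eq_one hb)
  have hFa : F a = b := monoidHomOfForallMemZpowers_apply_gen ha _
  have hF (x : C) : F (σ • x) = MulAut.conj s • F x := by
    obtain ⟨i, rfl⟩ := ha x
    rw [MulAut.smul_def, map_zpow, map_zpow, map_zpow, smul_zpow', hσ, map_pow, hFa,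
      MulAut.smul_def, MulAut.conj_apply, hsb, mul_inv_cancel_right]
  refine ⟨SemidirectProduct.lift F (zpowersHom E s) fun m ↦ MonoidHom.ext fun x ↦ ?_, ?_, ?_⟩
  · simpa [-MulAut.conj_apply] using map_zpow_smul hF m.toAdd x
  · exact (SemidirectProduct.lift_inl ..).trans hFa
  · simp [stable]

/-- The homomorphism `MappingTorus σ → H` which is trivial on `C` and maps the stable letter to
`u`. -/
def stableChar {H : Type*} [Group H] (σ : MulAut C) (u : H) : MappingTorus σ →* H :=
  (zpowersHom H u).comp SemidirectProduct.rightHom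

theorem stableChar_ofFiber {H : Type*} [Group H] (u : H) (x : C) :
    stableChar σ u (ofFiber σ x) = 1 := by
  simp [stableChar, ofFiber]

theorem exists_crossedHom (ha : ∀ x, x ∈ Subgroup.zpowers a) (hσ : σ a = a ^ q)
    {v : (ZMod (Nat.card C))ˣ} (hv : (v : ZMod (Nat.card C)) = q) :
    ∃ ψ : MappingTorus σ → ZMod (Nat.card C),
      ψ (ofFiber σ a) = 1 ∧ ∀ g h, ψ (g * h) = stableChar σ v g • ψ h + ψ g := by
  let dlog (x : C) : ZMod (Nat.card C) := ((zmodMulEquivOfGenerator ha rfl).symm x).toAdd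
  have dlog_mul (x y : C) : dlog (x * y) = dlog x + dlog y := by
    simp only [dlog, map_mul, toAdd_mul]
  have dlog_zpow (i : ℤ) : dlog (a ^ i) = i :=
    congrArg Multiplicative.toAdd (zmodMulEquivOfGenerator_symm_apply_zpow ha rfl i)
  have dlog_smul (x : C) : dlog (σ • x) = v • dlog x := by
    obtain ⟨i, rfl⟩ := ha x
    have hσi : σ • a ^ i = a ^ (q * i : ℤ) := by
      rw [MulAut.smul_def, map_zpow, hσ, zpow_mul, zpow_natCast]
    rw [hσi, dlog_zpow, dlog_zpow, Units.smul_def, hv, smul_eq_mul, Int.cast_mul, Int.cast_natCast]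
  refine ⟨fun g ↦ dlog g.left, ?_, fun g h ↦ ?_⟩
  · simpa [ofFiber] using dlog_zpow 1
  · exact (dlog_mul _ _).trans <| (add_comm _ _).trans <|
      congrArg (· + dlog g.left) (map_zpow_smul dlog_smul g.right.toAdd h.left)

theorem stableChar_smul_zmodMulHom {d N : ℕ} {u : (ZMod (d * N))ˣ} (hu : (u : ZMod (d * N)) = q)
    (hq : (q : ZMod d) = 1) (g : MappingTorus σ) (x : ZMod d) :
    stableChar σ u g • zmodMulHom d N x = zmodMulHom d N x := by
  have hfix : u ∈ MulAction.stabilizer _ (zmodMulHom d N x) := by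
    rw [MulAction.mem_stabilizer_iff, Units.smul_def, hu, smul_eq_mul, ← nsmul_eq_mul, ← map_nsmul,
      nsmul_eq_mul, hq, one_mul]
  exact MulAction.mem_stabilizer_iff.1 (zpow_mem hfix g.right.toAdd)

end Presentation

section Obstruction

variable {R C A : Type u} [CommRing R] [Group C] [AddCommGroup A] [Module R A]
  {σ : MulAut C} {a : C} {q : ℕ}

variable (R A σ) in
/-- The failures of the two defining relations of `MappingTorus σ` in the central extension given by
a 2-cocycle, where `a` is meant to generate `C` and to satisfy `σ a = a ^ q`. -/
def obstruction (q : ℕ) (a : C) :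
    cocycles₂ (Rep.trivial R (MappingTorus σ) A) →ₗ[R] A × A :=
  (powObstruction (Nat.card C) (ofFiber σ a)).prod (conjObstruction q (ofFiber σ a) (stable σ))

theorem mem_coboundaries₂_of_obstruction_eq_zero (ha : ∀ x, x ∈ Subgroup.zpowers a)
    (hσ : σ a = a ^ q) {f : cocycles₂ (Rep.trivial R (MappingTorus σ) A)}
    (hf : obstruction R A σ q a f = 0) :
    ⇑f ∈ coboundaries₂ (Rep.trivial R (MappingTorus σ) A) := by
  obtain ⟨s, hsa, hst⟩ := exists_hom (E := CocycleExtension f) ha hσ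
    (CocycleExtension.mk_zero_pow_eq_one (ofFiber_pow_card a) (congrArg Prod.fst hf))
    (CocycleExtension.mk_zero_mul_mk_zero (stable_mul_ofFiber_pow hσ) (congrArg Prod.snd hf))
  have hs : CocycleExtension.baseHom.comp s = MonoidHom.id _ :=
    hom_ext ha (by simp [hsa]) (by simp [hst])
  exact CocycleExtension.mem_coboundaries₂_of_rightInverse (DFunLike.congr_fun hs)

theorem obstruction_eq_zero_of_mem_coboundaries₂ (hσ : σ a = a ^ q)
    (hcard : ∀ x : A, Nat.card C • x = 0) (hq : ∀ x : A, q • x = x)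
    {f : cocycles₂ (Rep.trivial R (MappingTorus σ) A)}
    (hf : ⇑f ∈ coboundaries₂ (Rep.trivial R (MappingTorus σ) A)) :
    obstruction R A σ q a f = 0 := by
  obtain ⟨c, hc⟩ := (mem_coboundaries₂_trivial_iff f).1 hf
  refine Prod.ext ?_ ?_
  · exact (powObstruction_of_coboundary (ofFiber_pow_card a) hc).trans (hcard _)
  · exact (conjObstruction_of_coboundary (stable_mul_ofFiber_pow hσ) hc).trans
      (sub_eq_zero.2 (hq _).symm)

end Obstruction

section Surjectivity

variable {R C : Type} [CommRing R] [Group C] {σ : MulAut C} {a : C} {d q : ℕ} [Module R (ZMod d)]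

theorem exists_obstruction_eq_zero_one (ha : ∀ x, x ∈ Subgroup.zpowers a) (hσ : σ a = a ^ q)
    (hd : d ∣ Nat.card C) (hq : (q : ZMod d) = 1) :
    ∃ f, obstruction R (ZMod d) σ q a f = (0, 1) := by
  obtain ⟨α, hαa, hαt⟩ := exists_hom (E := Multiplicative (ZMod d)) (σ := σ) (b := 1)
    (s := .ofAdd 1) ha hσ (one_pow _) (by simp)
  have hb : (.ofAdd 1 : Multiplicative (ZMod d)) ^ Nat.card C = 1 := by
    rw [← ofAdd_nsmul, nsmul_one, (ZMod.natCast_eq_zero_iff _ _).2 hd, ofAdd_zero]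
  obtain ⟨β, hβa, hβt⟩ := exists_hom (E := Multiplicative (ZMod d)) (σ := σ)
    (b := .ofAdd 1) (s := 1) ha hσ hb (by rw [one_mul, mul_one, ← ofAdd_nsmul, nsmul_one, hq])
  obtain ⟨f, hf⟩ := exists_cocycle₂_cup (R := R) α β
  refine ⟨f, Prod.ext ?_ ?_⟩
  · refine (powObstruction_apply ..).trans ?_
    simp [hf, hαa]
  · refine (conjObstruction_apply ..).trans ?_
    simp [hf, hαa, hαt, hβa, hβt]

theorem exists_obstruction_fst_eq_one [Finite C] (ha : ∀ x, x ∈ Subgroup.zpowers a)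
    (hσ : σ a = a ^ q) (hd : d ∣ Nat.card C) (hq : (q : ZMod d) = 1) :
    ∃ f, (obstruction R (ZMod d) σ q a f).1 = 1 := by
  set N := Nat.card C
  have hqN : q.Coprime N := coprime_card_of_map_generator ha hσ
  let red : ZMod (d * N) →+* ZMod N := ZMod.castHom (dvd_mul_left N d) (ZMod N)
  let u : (ZMod (d * N))ˣ := ZMod.unitOfCoprime q ((hqN.coprime_dvd_right hd).mul_right hqN)
  have hu : (u : ZMod (d * N)) = q := ZMod.coe_unitOfCoprime ..
  obtain ⟨ψ, hψa, hψ⟩ := exists_crossedHom (v := ZMod.unitsMap (dvd_mul_left N d) u) ha hσ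
    (by rw [ZMod.unitsMap_val, hu, ZMod.cast_natCast (dvd_mul_left N d)])
  have red_smul (g : MappingTorus σ) (z : ZMod (d * N)) :
      red (stableChar σ u g • z) = stableChar σ (ZMod.unitsMap (dvd_mul_left N d) u) g • red z :=
    map_zpow_smul (fun z ↦ map_mul red (u : ZMod (d * N)) z) g.right.toAdd z
  choose e he using fun g ↦ ZMod.castHom_surjective (dvd_mul_left N d) (ψ g)
  have hι : Function.Injective (zmodMulHom d N) := zmodMulHom_injective d Nat.card_pos.ne'
  obtain ⟨f, hf⟩ := exists_cocycle₂_bockstein (R := R) (stableChar σ u) hι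
    (stableChar_smul_zmodMulHom hu hq) (e := e) fun g h ↦ by
      have : red (stableChar σ u g • e h - e (g * h) + e g) = 0 := by
        rw [map_add, map_sub, red_smul, he, he, he, hψ]
        abel
      exact mem_range_zmodMulHom.2 this
  refine ⟨f, hι ?_⟩
  calc zmodMulHom d N (powObstruction N (ofFiber σ a) f)
      = N • e (ofFiber σ a) + e 1 - e (ofFiber σ a ^ N) := by
        rw [powObstruction_apply, map_sum, ← sum_range_coboundary_pow]
        simp only [hf, ← map_pow, stableChar_ofFiber, one_smul]
    _ = N • e (ofFiber σ a) := by rw [ofFiber_pow_card, add_sub_cancel_right]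
    _ = zmodMulHom d N 1 := nsmul_eq_zmodMulHom_one hd ((he _).trans hψa)

theorem obstruction_surjective [Finite C] (ha : ∀ x, x ∈ Subgroup.zpowers a) (hσ : σ a = a ^ q)
    (hd : d ∣ Nat.card C) (hq : (q : ZMod d) = 1) :
    Function.Surjective (obstruction R (ZMod d) σ q a) := by
  obtain ⟨f, hf⟩ := exists_obstruction_fst_eq_one (R := R) ha hσ hd hq
  obtain ⟨g, hg⟩ := exists_obstruction_eq_zero_one (R := R) ha hσ hd hq
  rintro ⟨x, y⟩
  obtain ⟨x, rfl⟩ := ZMod.intCast_surjective x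
  obtain ⟨z, hz⟩ := ZMod.intCast_surjective (y - x • (obstruction R (ZMod d) σ q a f).2)
  exact ⟨x • f + z • g, by ext <;> simp [hf, hg, hz]⟩

end Surjectivity

end MappingTorus

theorem h2_semidirect_zmod_two_general {R C : Type} [CommRing R] [Group C] [Finite C] [IsCyclic C]
    (σ : MulAut C) {d q : ℕ} [Module R (ZMod d)] (hσ : ∀ x, σ x = x ^ q) (hd : d ∣ Nat.card C)
    (hq : q ≡ 1 [MOD d]) :
    Nonempty (H2 (Rep.trivial R (MappingTorus σ) (ZMod d)) ≃ₗ[R] ZMod d × ZMod d) := by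
  obtain ⟨a, ha⟩ := IsCyclic.exists_generator (α := C)
  have hcard (x : ZMod d) : Nat.card C • x = 0 := by
    rw [nsmul_eq_mul, (ZMod.natCast_eq_zero_iff _ _).2 hd, zero_mul]
  have hq' : (q : ZMod d) = 1 := by simpa using (ZMod.natCast_eq_natCast_iff q 1 d).2 hq
  exact ⟨h2EquivOfSurjective _ (MappingTorus.obstruction_surjective ha (hσ a) hd hq') fun _ ↦
    ⟨MappingTorus.mem_coboundaries₂_of_obstruction_eq_zero ha (hσ a),
     MappingTorus.obstruction_eq_zero_of_mem_coboundaries₂ (hσ a) hcard fun x ↦ by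
      rw [nsmul_eq_mul, hq', one_mul]⟩⟩

/-- For `q = pⁿ` (`p` an odd prime) and `k` the field with `q²` elements, the second
cohomology of `G = kˣ ⋊ ℤ` (where `m ∈ ℤ` acts by the `m`-th power of `x ↦ x^q`) with
trivial coefficients `ℤ/2ℤ` is isomorphic to `ℤ/2ℤ × ℤ/2ℤ`. -/
theorem h2_semidirect_zmod_two (p n : ℕ) (hp : p.Prime) (hodd : Odd p) (hn : 0 < n)
    (k : Type) [Field k] [Fintype k] (hk : Fintype.card k = (p ^ n) ^ 2)
    (σ : MulAut kˣ) (hσ : ∀ x : kˣ, σ x = x ^ (p ^ n)) :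
    Nonempty
      (H2 (Rep.trivial ℤ (kˣ ⋊[zpowersHom (MulAut kˣ) σ] Multiplicative ℤ) (ZMod 2)) ≃+
        (ZMod 2 × ZMod 2)) := by
  have hq : Odd (p ^ n) := hodd.pow
  have hcard : 2 ∣ Nat.card kˣ := by
    rw [Nat.card_units, Nat.card_eq_fintype_card, hk]
    exact (Nat.Odd.sub_odd hq.pow odd_one).two_dvd
  exact (h2_semidirect_zmod_two_general σ hσ hcard (Nat.odd_iff.1 hq)).map (·.toAddEquiv)
end
end

section
/- Let F be a finite-dimensional field extension of the 2-adic numbers ℚ₂. Then for any two units f₁, f₂ ∈ F^×, there exists a subgroup H of F^× of index 2 containing both f₁ and f₂. -/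
/-!
Any two elements of an abelian group `G` lie in a common subgroup of index 2 as soon as `8` divides
the index of the subgroup of squares (`Subgroup.index` is `0` when infinite): modulo squares `G` is
an `𝔽₂`-vector space, and two vectors in a space of dimension at least 3 lie in a hyperplane.

For `G = Fˣ` with ring of integers `O`, one factor of 2 comes from a uniformizer, which is not a
unit times a square. The other 4 come from `Oˣ`, which maps onto the units of the finite ring
`A = O/8`: by counting, the squares of `Aˣ` have as index the number of solutions of `u² = 1` in
`A`, and the image of `(ℤ/8)ˣ = {1, 3, 5, 7}` is a group of such solutions.
-/

section CommGroup

theorem exists_surjective_addMonoidHom_zmod {A : Type*} [AddCommGroup A] [Nontrivial A] {p : ℕ}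
    [Fact p.Prime] (hA : ∀ a : A, p • a = 0) :
    ∃ χ : A →+ ZMod p, Function.Surjective χ := by
  have : Module (ZMod p) A := AddCommGroup.zmodModule hA
  obtain ⟨f, hf⟩ := exists_ne (0 : Module.Dual (ZMod p) A)
  exact ⟨f.toAddMonoidHom, LinearMap.surjective hf⟩

variable {G : Type*} [CommGroup G] {K : Subgroup G}

theorem quotient_pow_eq_one {n : ℕ} (hK : ∀ x : G, x ^ n ∈ K) (q : G ⧸ K) : q ^ n = 1 := by
  obtain ⟨g, rfl⟩ := QuotientGroup.mk_surjective q
  exact (QuotientGroup.eq_one_iff (g ^ n)).2 (hK g)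

theorem exists_index_eq_prime_of_pow_mem {p : ℕ} [Fact p.Prime] (hK : ∀ x : G, x ^ p ∈ K)
    (hne : K ≠ ⊤) : ∃ H : Subgroup G, H.index = p ∧ K ≤ H := by
  have : Nontrivial (Additive (G ⧸ K)) := QuotientGroup.nontrivial_iff.2 hne
  obtain ⟨f, hf⟩ := exists_surjective_addMonoidHom_zmod (A := Additive (G ⧸ K))
    (p := p) fun q ↦ quotient_pow_eq_one hK q.toMul
  let χ : G →* Multiplicative (ZMod p) := f.toMultiplicativeRight.comp (QuotientGroup.mk' K)
  have hχ : Function.Surjective χ := hf.comp (QuotientGroup.mk'_surjective K)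
  refine ⟨χ.ker, ?_, fun x hx ↦ ?_⟩
  · rw [Subgroup.index_ker, χ.range_eq_top.2 hχ, Subgroup.card_top]
    exact Nat.card_zmod p
  · have hx1 : QuotientGroup.mk' K x = 1 := (QuotientGroup.eq_one_iff x).2 hx
    rw [MonoidHom.mem_ker, MonoidHom.comp_apply, hx1, map_one]

theorem index_dvd_pow_card_of_sup_closure_eq_top {n : ℕ} (hK : ∀ x : G, x ^ n ∈ K)
    {s : Finset G} (hs : K ⊔ Subgroup.closure s = ⊤) : K.index ∣ n ^ s.card := by
  classical
  have hgen : Subgroup.closure (s.image (QuotientGroup.mk' K) : Set (G ⧸ K)) = ⊤ := by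
    rw [Finset.coe_image, ← MonoidHom.map_closure, ← bot_sup_eq (Subgroup.map _ _),
      ← QuotientGroup.map_mk'_self K, ← Subgroup.map_sup, hs]
    exact Subgroup.map_top_of_surjective _ (QuotientGroup.mk'_surjective K)
  have : Group.FG (G ⧸ K) := Group.fg_iff'.2 ⟨_, _, rfl, hgen⟩
  exact (card_dvd_exponent_pow_rank' (G ⧸ K) (quotient_pow_eq_one hK)).trans
    (pow_dvd_pow n ((Group.rank_le hgen).trans Finset.card_image_le))

theorem exists_index_eq_prime_of_not_index_dvd {p : ℕ} [Fact p.Prime] (hK : ∀ x : G, x ^ p ∈ K)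
    {s : Finset G} (hs : ¬ K.index ∣ p ^ s.card) :
    ∃ H : Subgroup G, H.index = p ∧ (s : Set G) ⊆ H := by
  obtain ⟨H, hH, hle⟩ := exists_index_eq_prime_of_pow_mem
    (fun x ↦ Subgroup.mem_sup_left (hK x)) (mt (index_dvd_pow_card_of_sup_closure_eq_top hK) hs)
  exact ⟨H, hH, (Subgroup.closure_le H).1 (le_sup_right.trans hle)⟩

theorem exists_index_two_of_eight_dvd (hG : 8 ∣ (Subgroup.square G).index) (a b : G) :
    ∃ H : Subgroup G, H.index = 2 ∧ a ∈ H ∧ b ∈ H := by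
  classical
  have hndvd : ¬ (Subgroup.square G).index ∣ 2 ^ ({a, b} : Finset G).card := fun h ↦ by
    have hcard : 3 ≤ ({a, b} : Finset G).card :=
      (Nat.pow_dvd_pow_iff_le_right one_lt_two).1 (hG.trans h)
    exact absurd (hcard.trans Finset.card_le_two) (by decide)
  obtain ⟨H, hH, hle⟩ := exists_index_eq_prime_of_not_index_dvd IsSquare.sq hndvd
  exact ⟨H, hH, hle (by simp), hle (by simp)⟩

theorem index_square_dvd_of_surjective {H : Type*} [CommGroup H] {f : G →* H}
    (hf : Function.Surjective f) : (Subgroup.square H).index ∣ (Subgroup.square G).index := by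
  have hle : (Subgroup.square G).map f ≤ Subgroup.square H := by
    rintro _ ⟨x, hx, rfl⟩
    exact IsSquare.map f hx
  exact (Subgroup.index_dvd_of_le hle).trans (Subgroup.index_map_dvd _ hf)

theorem index_square_eq_card_ker [Finite G] :
    (Subgroup.square G).index = Nat.card (powMonoidHom 2 : G →* G).ker := by
  have hrange : Subgroup.square G = (powMonoidHom 2).range := by
    ext x
    simp only [Subgroup.mem_square, isSquare_iff_exists_sq, MonoidHom.mem_range,
      powMonoidHom_apply, eq_comm]
  rw [hrange, Subgroup.index_range]

end CommGroup

section CommRing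

variable {R : Type*} [CommRing R]

theorem charP_quotient_span_prime_pow [IsDomain R] {p : ℕ} (hp : p.Prime) (h0 : (p : R) ≠ 0)
    (hu : ¬ IsUnit (p : R)) (n : ℕ) : CharP (R ⧸ Ideal.span {(p : R) ^ n}) (p ^ n) := by
  have hcast (k : ℕ) : ((p ^ k : ℕ) : R ⧸ Ideal.span {(p : R) ^ n}) = 0 ↔ n ≤ k := by
    rw [← map_natCast (Ideal.Quotient.mk _), Ideal.Quotient.eq_zero_iff_dvd, Nat.cast_pow,
      pow_dvd_pow_iff h0 hu]
  obtain ⟨c, hc⟩ := CharP.exists (R ⧸ Ideal.span {(p : R) ^ n})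
  have hdvd : c ∣ p ^ n := (CharP.cast_eq_zero_iff _ c _).1 ((hcast n).2 le_rfl)
  obtain ⟨k, hkn, rfl⟩ := (Nat.dvd_prime_pow hp).1 hdvd
  have hnk : n ≤ k := (hcast k).1 (CharP.cast_eq_zero _ _)
  rwa [hkn.antisymm hnk] at hc

theorem four_dvd_index_square_units_of_charP_eight [Finite R] [CharP R 8] :
    4 ∣ (Subgroup.square Rˣ).index := by
  let f : (ZMod 8)ˣ →* Rˣ := Units.map (ZMod.castHom dvd_rfl R).toMonoidHom
  have hf : Function.Injective f := Units.map_injective (ZMod.castHom_injective R)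
  have hsq : ∀ u : (ZMod 8)ˣ, u ^ 2 = 1 := by decide
  have hle : f.range ≤ (powMonoidHom 2).ker := by
    rintro _ ⟨u, rfl⟩
    rw [MonoidHom.mem_ker, powMonoidHom_apply, ← map_pow, hsq, map_one]
  have hcard : Nat.card f.range = 4 := by
    rw [← Nat.card_congr (f.ofInjective hf).toEquiv, Nat.card_eq_fintype_card,
      ZMod.card_units_eq_totient]
    decide
  rw [index_square_eq_card_ker, ← hcard]
  exact Subgroup.card_dvd_of_le hle

theorem units_map_quotient_mk_surjective {I : Ideal R} (hI : I ≤ Ring.jacobson R) :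
    Function.Surjective (Units.map (Ideal.Quotient.mk I).toMonoidHom) :=
  IsLocalRing.surjective_units_map_of_local_ringHom _ Ideal.Quotient.mk_surjective
    (isLocalHom_of_le_jacobson_bot I (Ideal.jacobson_bot (R := R) ▸ hI))

theorem not_isUnit_of_mem_jacobson [Nontrivial R] {r : R} (hr : r ∈ Ring.jacobson R) :
    ¬ IsUnit r := by
  obtain ⟨M, hM⟩ := Ideal.exists_maximal R
  exact fun h ↦ hM.ne_top (Ideal.eq_top_of_isUnit_mem M (Ring.jacobson_le_of_isMaximal M hr) h)

theorem four_dvd_index_square_units [IsDomain R] [CharZero R]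
    (hJ : (2 : R) ∈ Ring.jacobson R) [Finite (R ⧸ Ideal.span {(2 : R)})] :
    4 ∣ (Subgroup.square Rˣ).index := by
  have hchar : CharP (R ⧸ Ideal.span {(2 : R) ^ 3}) 8 := by
    exact_mod_cast charP_quotient_span_prime_pow Nat.prime_two (R := R) two_ne_zero
      (not_isUnit_of_mem_jacobson hJ) 3
  have hfin : Finite (R ⧸ Ideal.span {(2 : R) ^ 3}) := by
    rw [← Ideal.span_singleton_pow]
    exact Ideal.finite_quotient_pow (Submodule.fg_span_singleton _) 3
  have hle : Ideal.span {(2 : R) ^ 3} ≤ Ring.jacobson R :=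
    (Ideal.span_singleton_le_iff_mem _).2 (Ideal.pow_mem_of_mem _ hJ 3 three_pos)
  exact four_dvd_index_square_units_of_charP_eight.trans
    (index_square_dvd_of_surjective (units_map_quotient_mk_surjective hle))

theorem algebraMap_mem_jacobson {S : Type*} [CommRing S] [Algebra R S]
    [Algebra.IsIntegral R S] {r : R} (hr : r ∈ Ring.jacobson R) :
    algebraMap R S r ∈ Ring.jacobson S := by
  rw [← Ideal.jacobson_bot, Ideal.jacobson, Ideal.mem_sInf]
  rintro M ⟨-, hM⟩
  have := Ideal.isMaximal_comap_of_isIntegral_of_isMaximal (R := R) M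
  exact Ring.jacobson_le_of_isMaximal (M.comap (algebraMap R S)) hr

theorem finite_quotient_span_algebraMap (S : Type*) [CommRing S] [Algebra R S]
    [Module.Finite R S] (r : R) [Finite (R ⧸ Ideal.span {r})] :
    Finite (S ⧸ Ideal.span {algebraMap R S r}) := by
  rw [← Set.image_singleton, ← Ideal.map_span]
  have : Module.Finite (R ⧸ Ideal.span {r}) (S ⧸ (Ideal.span {r}).map (algebraMap R S)) :=
    Module.Finite.of_restrictScalars_finite R _ _
  exact Module.finite_of_finite (R ⧸ Ideal.span {r})

end CommRing

section FractionField

variable {O K : Type*} [CommRing O] [Field K] [Algebra O K] [IsFractionRing O K]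

theorem comap_square_units_eq [IsIntegrallyClosed O] :
    (Subgroup.square Kˣ).comap (Units.map (algebraMap O K).toMonoidHom) =
      Subgroup.square Oˣ := by
  ext u
  refine ⟨fun h ↦ ?_, fun h ↦ IsSquare.map _ h⟩
  obtain ⟨y, hy⟩ := isSquare_iff_exists_sq _ |>.1 h
  have hyK : (y : K) ^ 2 = algebraMap O K u := (congrArg Units.val hy).symm
  obtain ⟨z, hz⟩ := IsIntegrallyClosed.exists_algebraMap_eq_of_isIntegral_pow two_pos
    (hyK ▸ isIntegral_algebraMap : IsIntegral O ((y : K) ^ 2))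
  have hzu : z ^ 2 = u := IsFractionRing.injective O K (by rw [map_pow, hz, hyK])
  have hz_unit : IsUnit z := (isUnit_pow_iff two_ne_zero).1 (hzu ▸ u.isUnit)
  exact isSquare_iff_exists_sq _ |>.2 ⟨hz_unit.unit, Units.ext hzu.symm⟩

theorem range_units_sup_square_ne_top [IsDedekindDomain O] (hO : ¬ IsField O) :
    (Units.map (algebraMap O K).toMonoidHom).range ⊔ Subgroup.square Kˣ ≠ ⊤ := by
  obtain ⟨M, hM⟩ := Ideal.exists_maximal O
  let v : IsDedekindDomain.HeightOneSpectrum O :=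
    ⟨M, hM.isPrime, Ring.ne_bot_of_isMaximal_of_not_isField hM hO⟩
  obtain ⟨ϖ, hϖ⟩ := v.valuation_exists_uniformizer K
  have hϖ0 : ϖ ≠ 0 := (v.valuation K).ne_zero_iff.1 (hϖ ▸ WithZero.exp_ne_zero)
  intro htop
  obtain ⟨_, ⟨u, rfl⟩, s, hs, hus⟩ :=
    Subgroup.mem_sup.1 (htop ▸ Subgroup.mem_top (Units.mk0 ϖ hϖ0))
  obtain ⟨y, rfl⟩ := isSquare_iff_exists_sq _ |>.1 hs
  have hu : v.valuation K (algebraMap O K u) = 1 :=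
    v.valuation_eq_one_iff_notMem.2 fun h ↦ hM.ne_top (Ideal.eq_top_of_isUnit_mem _ h u.isUnit)
  have hval : v.valuation K (y : K) ^ 2 = WithZero.exp (-1 : ℤ) := by
    rw [← hϖ, ← one_mul (_ ^ 2), ← hu, ← map_pow, ← map_mul]
    exact congrArg (fun x : Kˣ ↦ v.valuation K (x : K)) hus
  have hlog : 2 * WithZero.log (v.valuation K (y : K)) = -1 := by
    simpa only [WithZero.log_pow, WithZero.log_exp, nsmul_eq_mul, Nat.cast_ofNat]
      using congrArg WithZero.log hval
  omega

variable (K) in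
theorem eight_dvd_index_square_units [IsDedekindDomain O] [CharZero O]
    (hJ : (2 : O) ∈ Ring.jacobson O) [Finite (O ⧸ Ideal.span {(2 : O)})] :
    8 ∣ (Subgroup.square Kˣ).index := by
  let φ : Oˣ →* Kˣ := Units.map (algebraMap O K).toMonoidHom
  have hfield : ¬ IsField O := fun h ↦
    not_isUnit_of_mem_jacobson hJ
      (IsUnit.of_mul_eq_one _ (h.mul_inv_cancel two_ne_zero).choose_spec)
  have hsup : 2 ∣ (φ.range ⊔ Subgroup.square Kˣ).index := by
    obtain ⟨H, hH, hle⟩ := exists_index_eq_prime_of_pow_mem (p := 2)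
      (fun x : Kˣ ↦ Subgroup.mem_sup_right (IsSquare.sq x)) (range_units_sup_square_ne_top hfield)
    exact hH ▸ Subgroup.index_dvd_of_le hle
  have hunits : 4 ∣ (Subgroup.square Kˣ).relIndex (φ.range ⊔ Subgroup.square Kˣ) := by
    rw [Subgroup.relIndex_sup_right, ← Subgroup.index_comap, comap_square_units_eq]
    exact four_dvd_index_square_units hJ
  rw [← Subgroup.relIndex_mul_index (le_sup_right : Subgroup.square Kˣ ≤ φ.range ⊔ _)]
  exact mul_dvd_mul hunits hsup

end FractionField

theorem finite_padicInt_quotient_span_p (p : ℕ) [Fact p.Prime] :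
    Finite (ℤ_[p] ⧸ Ideal.span {(p : ℤ_[p])}) := by
  rw [← PadicInt.maximalIdeal_eq_span_p]
  exact .of_injective _ (PadicInt.residueField (p := p)).injective

theorem padicInt_p_mem_jacobson (p : ℕ) [Fact p.Prime] : (p : ℤ_[p]) ∈ Ring.jacobson ℤ_[p] := by
  rw [IsLocalRing.ringJacobson_eq_maximalIdeal, PadicInt.maximalIdeal_eq_span_p]
  exact Ideal.mem_span_singleton_self _

theorem exists_index_two_subgroup_containing_general {R K F : Type*} [CommRing R]
    [IsDedekindDomain R] [Field K] [CharZero K] [Algebra R K] [IsFractionRing R K] [Field F]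
    [Algebra K F] [FiniteDimensional K F] (hJ : (2 : R) ∈ Ring.jacobson R)
    [Finite (R ⧸ Ideal.span {(2 : R)})] (f₁ f₂ : Fˣ) :
    ∃ H : Subgroup Fˣ, H.index = 2 ∧ f₁ ∈ H ∧ f₂ ∈ H := by
  let _ : Algebra R F := Algebra.compHom F (algebraMap R K)
  have : IsScalarTower R K F := .of_algebraMap_eq fun _ ↦ rfl
  have : CharZero F := charZero_of_injective_algebraMap (algebraMap K F).injective
  let O := integralClosure R F
  have : CharZero O := (algebraMap O F).charZero
  have : IsDedekindDomain O := integralClosure.isDedekindDomain R K F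
  have : IsFractionRing O F := integralClosure.isFractionRing_of_finite_extension K F
  have : IsNoetherian R O := IsIntegralClosure.isNoetherian R K F O
  have : Finite (O ⧸ Ideal.span {(2 : O)}) := by
    simpa only [map_ofNat] using finite_quotient_span_algebraMap O (2 : R)
  have hJO : (2 : O) ∈ Ring.jacobson O := by
    simpa only [map_ofNat] using algebraMap_mem_jacobson (S := O) hJ
  exact exists_index_two_of_eight_dvd (eight_dvd_index_square_units F hJO) f₁ f₂

/-- Let `F` be a finite extension of `ℚ₂`. Then any two units `f₁, f₂ ∈ Fˣ` are contained
in a common subgroup of `Fˣ` of index 2. -/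
theorem exists_index_two_subgroup_containing (F : Type) [Field F] [Algebra ℚ_[2] F]
    [FiniteDimensional ℚ_[2] F] (f₁ f₂ : Fˣ) :
    ∃ H : Subgroup Fˣ, H.index = 2 ∧ f₁ ∈ H ∧ f₂ ∈ H := by
  have : Finite (ℤ_[2] ⧸ Ideal.span {(2 : ℤ_[2])}) := finite_padicInt_quotient_span_p 2
  exact exists_index_two_subgroup_containing_general (K := ℚ_[2]) (padicInt_p_mem_jacobson 2) f₁ f₂
end

section
/- Let F be a finite-dimensional field extension of the 2-adic numbers ℚ₂. Then the quotient group F^×/(F^×)² of the unit group of F by its subgroup of squares has cardinality at least 8. (Equivalently, F^×/(F^×)² is a vector space over ℤ/2ℤ of dimension at least 3.) -/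
/-!
Let `R` be an integrally closed domain with fraction field `F`, and `P` a prime of `R` containing
`2 ≠ 0`, with finite residue ring and `P ^ 2 ≠ P`. Choose `π ∈ P \ P ^ 2`, and `u ∈ R` not of the
form `z ^ 2 + z`; it exists because `z ↦ z ^ 2 + z` identifies `0` with `-1`, hence is not
surjective on the finite ring `R ⧸ P`. Then `π`, `1 + π`, `1 + 4 * u` are independent modulo
squares: modulo `P ^ 2`, any product of some of them involving `π` is congruent to `π`, the
remaining ones involving `1 + π` are congruent to `1 + π`, and a square can be neither; finally
`1 + 4 * u` is the discriminant of `X ^ 2 + X - u`, which has no root in `F`. For a finite extension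
of `ℚ_[2]`, the integral closure of `ℤ_[2]` is such a ring.
-/

open Cardinal Function

section ProductsModSquares

variable {ι : Type*}

-- The factor of least index decides: all the others lie in the corresponding submonoid.
theorem not_isSquare_prod_of_forall_lt_mem [LinearOrder ι] {M : Type*} [CommMonoid M]
    {x : ι → M} {H : ι → Submonoid M} (hmem : ∀ i j, i < j → x j ∈ H i)
    (hns : ∀ i, ∀ w ∈ H i, ¬ IsSquare (x i * w)) {s : Finset ι} (hs : s.Nonempty) :
    ¬ IsSquare (∏ i ∈ s, x i) := by
  rw [← Finset.mul_prod_erase s x (s.min'_mem hs)]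
  exact hns _ _ <| prod_mem fun j hj ↦
    hmem _ _ (s.min'_lt_of_mem_erase_min' hs hj)

theorem injective_mk_prod_of_forall_not_isSquare {G : Type*} [CommGroup G] {x : ι → G}
    (hx : ∀ s : Finset ι, s.Nonempty → ¬ IsSquare (∏ i ∈ s, x i)) :
    Injective fun s : Finset ι ↦
      (QuotientGroup.mk (∏ i ∈ s, x i) : G ⧸ (powMonoidHom 2 : G →* G).range) := by
  classical
  intro s t hst
  obtain ⟨z, hz⟩ := QuotientGroup.eq.1 hst
  by_contra hne
  refine hx (symmDiff s t) (Finset.symmDiff_nonempty.2 hne) ⟨z * ∏ i ∈ s \ t, x i, ?_⟩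
  have hdiff : (∏ i ∈ s \ t, x i) * z ^ 2 = ∏ i ∈ t \ s, x i := by
    refine mul_left_cancel (a := ∏ i ∈ s ∩ t, x i) ?_
    rw [← mul_assoc, Finset.prod_inter_mul_prod_sdiff, Finset.inter_comm s t,
      Finset.prod_inter_mul_prod_sdiff]
    exact eq_inv_mul_iff_mul_eq.1 hz
  calc ∏ i ∈ symmDiff s t, x i
      = (∏ i ∈ s \ t, x i) * ∏ i ∈ t \ s, x i := Finset.prod_union disjoint_sdiff_sdiff
    _ = z * (∏ i ∈ s \ t, x i) * (z * ∏ i ∈ s \ t, x i) := by rw [← hdiff, sq]; ac_rfl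

theorem two_pow_card_le_mk_quotient_squares [Fintype ι] {G : Type*} [CommGroup G] {x : ι → G}
    (hx : ∀ s : Finset ι, s.Nonempty → ¬ IsSquare (∏ i ∈ s, x i)) :
    2 ^ Fintype.card ι ≤ #(G ⧸ (powMonoidHom 2 : G →* G).range) := by
  have := lift_mk_le_lift_mk_of_injective (injective_mk_prod_of_forall_not_isSquare hx)
  rw [mk_fintype, Fintype.card_finset, lift_natCast, nat_le_lift_iff] at this
  exact_mod_cast this

end ProductsModSquares

section IntegrallyClosed

variable {R F : Type*} [CommRing R] [IsIntegrallyClosed R] [Field F] [Algebra R F]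
  [IsFractionRing R F]

variable (F) in
theorem isSquare_algebraMap_iff {r : R} : IsSquare (algebraMap R F r) ↔ IsSquare r := by
  refine ⟨fun ⟨x, hx⟩ ↦ ?_, fun h ↦ h.map (algebraMap R F)⟩
  obtain ⟨y, rfl⟩ : ∃ y, algebraMap R F y = x :=
    IsIntegrallyClosed.exists_algebraMap_eq_of_isIntegral_pow two_pos
      (by rw [sq, ← hx]; exact isIntegral_algebraMap)
  exact ⟨y, IsFractionRing.injective R F (by rw [hx, map_mul])⟩

variable (F) in
theorem two_pow_card_le_mk_units_quotient_squares {ι : Type*} [Fintype ι] {x : ι → R}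
    (hx : ∀ s : Finset ι, s.Nonempty → ¬ IsSquare (∏ i ∈ s, x i)) :
    2 ^ Fintype.card ι ≤ #(Fˣ ⧸ (powMonoidHom 2 : Fˣ →* Fˣ).range) := by
  have hx0 (i : ι) : algebraMap R F (x i) ≠ 0 := fun h ↦
    hx {i} (Finset.singleton_nonempty i) <| (isSquare_algebraMap_iff F).1 <| by simp [h]
  refine two_pow_card_le_mk_quotient_squares (x := fun i ↦ Units.mk0 _ (hx0 i)) fun s hs hsq ↦
    hx s hs <| (isSquare_algebraMap_iff F).1 ?_
  simpa using hsq.map (Units.coeHom F)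

theorem isSquare_one_add_four_mul_iff [IsDomain R] (h2 : (2 : R) ≠ 0) {u : R} :
    IsSquare (1 + 4 * u) ↔ ∃ z, z ^ 2 + z = u := by
  refine ⟨fun h ↦ ?_, fun ⟨z, hz⟩ ↦ ⟨1 + 2 * z, by rw [← hz]; ring⟩⟩
  let K := FractionRing R
  have : NeZero (2 : K) := ⟨by
    simpa only [map_ofNat, map_zero] using (IsFractionRing.injective R K).ne h2⟩
  obtain ⟨z, hz⟩ : ∃ z : K, 1 * (z * z) + 1 * z + -algebraMap R K u = 0 := by
    refine exists_quadratic_eq_zero one_ne_zero ?_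
    obtain ⟨y, hy⟩ := h.map (algebraMap R K)
    exact ⟨y, by rw [← hy, discrim, map_add, map_one, map_mul, map_ofNat]; ring⟩
  obtain ⟨w, rfl⟩ : ∃ w, algebraMap R K w = z := by
    refine IsIntegrallyClosed.isIntegral_iff.1
      ⟨.X ^ 2 + .X - .C u, by monicity!, ?_⟩
    simpa [sq, sub_eq_add_neg] using hz
  exact ⟨w, IsFractionRing.injective R K <| by
    simp only [map_add, map_pow]; linear_combination hz⟩

end IntegrallyClosed

theorem not_surjective_sq_add_self (k : Type*) [Ring k] [Nontrivial k] [Finite k] :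
    ¬ Surjective fun z : k ↦ z ^ 2 + z := fun h ↦
  neg_ne_zero.2 one_ne_zero (Finite.injective_iff_surjective.2 h (by simp : _ = (0 : k) ^ 2 + 0))

section Ideal

variable {R : Type*} [CommRing R]

theorem exists_forall_sq_add_self_ne {I : Ideal R} (hI : I ≠ ⊤) [Finite (R ⧸ I)] :
    ∃ u : R, ∀ z, z ^ 2 + z ≠ u := by
  have := Ideal.Quotient.nontrivial_iff.2 hI
  by_contra! h
  refine not_surjective_sq_add_self (R ⧸ I) fun v ↦ ?_
  obtain ⟨u, rfl⟩ := Ideal.Quotient.mk_surjective v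
  obtain ⟨z, rfl⟩ := h u
  exact ⟨Ideal.Quotient.mk I z, by simp⟩

/-- The multiplicative monoid `1 + I`, which plays the role of the higher unit groups of a local
field. Its elements need not be units. -/
def oneAddSubmonoid (I : Ideal R) : Submonoid R :=
  MonoidHom.mker (Ideal.Quotient.mk I : R →* R ⧸ I)

theorem mem_oneAddSubmonoid {I : Ideal R} {w : R} : w ∈ oneAddSubmonoid I ↔ w - 1 ∈ I := by
  rw [← Ideal.Quotient.mk_eq_mk_iff_sub_mem]; rfl

variable {P : Ideal R} {π w : R}

theorem not_isSquare_of_mem_of_notMem_sq (hP : P.IsRadical) (hπ : π ∈ P) (hπ2 : π ∉ P ^ 2) :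
    ¬ IsSquare π := by
  rintro ⟨y, rfl⟩
  have hy : y ∈ P := hP ⟨2, by rwa [sq]⟩
  exact hπ2 (sq P ▸ Ideal.mul_mem_mul hy hy)

theorem not_isSquare_one_add_of_mem_of_notMem_sq (hP : P.IsRadical) (h2 : 2 ∈ P) (hπ : π ∈ P)
    (hπ2 : π ∉ P ^ 2) : ¬ IsSquare (1 + π) := by
  rintro ⟨y, hy⟩
  have hy1 : y - 1 ∈ P := by
    refine hP ⟨2, ?_⟩
    rw [show (y - 1) ^ 2 = π + 2 * (1 - y) by linear_combination -hy]
    exact add_mem hπ (P.mul_mem_right _ h2)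
  refine hπ2 ?_
  rw [show π = (y - 1) * (y - 1) + 2 * (y - 1) by linear_combination hy, sq]
  exact add_mem (Ideal.mul_mem_mul hy1 hy1) (Ideal.mul_mem_mul h2 hy1)

theorem not_isSquare_mul_of_mem_oneAddSubmonoid (hP : P.IsRadical) (hπ : π ∈ P) (hπ2 : π ∉ P ^ 2)
    (hw : w ∈ oneAddSubmonoid P) : ¬ IsSquare (π * w) := by
  refine not_isSquare_of_mem_of_notMem_sq hP (P.mul_mem_right w hπ) fun h ↦ hπ2 ?_
  have hdiff : π * (w - 1) ∈ P ^ 2 := sq P ▸ Ideal.mul_mem_mul hπ (mem_oneAddSubmonoid.1 hw)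
  convert sub_mem h hdiff using 1
  ring

theorem not_isSquare_one_add_mul_of_mem_oneAddSubmonoid (hP : P.IsRadical) (h2 : 2 ∈ P)
    (hπ : π ∈ P) (hπ2 : π ∉ P ^ 2) (hw : w ∈ oneAddSubmonoid (P ^ 2)) :
    ¬ IsSquare ((1 + π) * w) := by
  have hdiff : (1 + π) * (w - 1) ∈ P ^ 2 := Ideal.mul_mem_left _ _ (mem_oneAddSubmonoid.1 hw)
  rw [show (1 + π) * w = 1 + (π + (1 + π) * (w - 1)) by ring]
  exact not_isSquare_one_add_of_mem_of_notMem_sq hP h2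
    (add_mem hπ (Ideal.pow_le_self two_ne_zero hdiff))
    fun h ↦ hπ2 ((add_mem_cancel_right hdiff).1 h)

theorem not_isSquare_prod_of_mem_of_notMem_sq [IsDomain R] [IsIntegrallyClosed R]
    (hP : P.IsRadical) (h2 : 2 ∈ P) (h20 : (2 : R) ≠ 0) (hπ : π ∈ P) (hπ2 : π ∉ P ^ 2) {u : R}
    (hu : ∀ z, z ^ 2 + z ≠ u) {s : Finset (Fin 3)} (hs : s.Nonempty) :
    ¬ IsSquare (∏ i ∈ s, ![π, 1 + π, 1 + 4 * u] i) := by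
  have h4 : 4 * u ∈ P ^ 2 := by
    rw [show 4 * u = 2 * 2 * u by ring, sq]
    exact Ideal.mul_mem_right _ _ (Ideal.mul_mem_mul h2 h2)
  refine not_isSquare_prod_of_forall_lt_mem
    (H := fun i ↦ oneAddSubmonoid (![P, P ^ 2, ⊥] i)) ?_ ?_ hs
  · simp [Fin.forall_fin_succ, mem_oneAddSubmonoid, hπ, h4, Ideal.pow_le_self two_ne_zero h4]
  · simp only [Fin.forall_fin_succ, IsEmpty.forall_iff, and_true]
    refine ⟨fun w ↦ not_isSquare_mul_of_mem_oneAddSubmonoid hP hπ hπ2,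
      fun w ↦ not_isSquare_one_add_mul_of_mem_oneAddSubmonoid hP h2 hπ hπ2, fun w hw ↦ ?_⟩
    obtain rfl : w = 1 := sub_eq_zero.1 (mem_oneAddSubmonoid.1 hw)
    simpa [isSquare_one_add_four_mul_iff h20] using hu

theorem eight_le_mk_units_quotient_squares_of_isFractionRing (F : Type*) [Field F] [Algebra R F]
    [IsFractionRing R F] [IsIntegrallyClosed R] (P : Ideal R) [P.IsPrime] [Finite (R ⧸ P)]
    (h2 : 2 ∈ P) (h20 : (2 : R) ≠ 0) (hP : P ^ 2 ≠ P) :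
    8 ≤ #(Fˣ ⧸ (powMonoidHom 2 : Fˣ →* Fˣ).range) := by
  have : IsDomain R := (IsFractionRing.injective R F).isDomain
  obtain ⟨π, hπ, hπ2⟩ := SetLike.exists_of_lt ((Ideal.pow_le_self two_ne_zero).lt_of_ne hP)
  obtain ⟨u, hu⟩ := exists_forall_sq_add_self_ne (Ideal.IsPrime.ne_top ‹P.IsPrime›)
  have := two_pow_card_le_mk_units_quotient_squares F fun _ ↦
    not_isSquare_prod_of_mem_of_notMem_sq (Ideal.IsPrime.isRadical ‹_›) h2 h20 hπ hπ2 hu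
  norm_num at this
  exact this

end Ideal

theorem exists_isMaximal_liesOver_finite_quotient {A B : Type*} [CommRing A] [CommRing B]
    [Algebra A B] [FaithfulSMul A B] [Module.Finite A B] (p : Ideal A) [p.IsMaximal]
    [Finite (A ⧸ p)] : ∃ P : Ideal B, P.IsMaximal ∧ P.LiesOver p ∧ Finite (B ⧸ P) := by
  obtain ⟨P, hP, hPp⟩ := Ideal.exists_maximal_ideal_liesOver_of_isIntegral p (S := B)
  have : Module.Finite (A ⧸ p) (B ⧸ P) := .of_restrictScalars_finite A _ _
  exact ⟨P, hP, hPp, Module.finite_of_finite (A ⧸ p)⟩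

theorem card_units_mod_squares_ge_eight_general {A : Type*} (K F : Type*) [CommRing A]
    [IsNoetherianRing A] [IsIntegrallyClosed A] [Field K] [CharZero K] [Algebra A K]
    [IsFractionRing A K] [Field F] [Algebra K F] [FiniteDimensional K F] (p : Ideal A) [p.IsPrime]
    [Finite (A ⧸ p)] (h2 : 2 ∈ p) :
    8 ≤ #(Fˣ ⧸ (powMonoidHom 2 : Fˣ →* Fˣ).range) := by
  have : IsDomain A := (IsFractionRing.injective A K).isDomain
  let _ : Algebra A F := Algebra.compHom F (algebraMap A K)
  have : IsScalarTower A K F := .of_algebraMap_eq fun _ ↦ rfl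
  have : FaithfulSMul A F := .trans A K F
  have : CharZero F := charZero_of_injective_algebraMap (algebraMap K F).injective
  let B := integralClosure A F
  have : IsFractionRing B F := integralClosure.isFractionRing_of_finite_extension K F
  have : IsIntegrallyClosed B := integralClosure.isIntegrallyClosedOfFiniteExtension K
  have : Module.Finite A B := IsIntegralClosure.finite A K F B
  have : IsNoetherianRing B := IsIntegralClosure.isNoetherianRing A K F B
  have : p.IsMaximal := Ideal.Quotient.maximal_of_isField p (Finite.isField_of_domain _)
  obtain ⟨P, hP, hPp, _⟩ := exists_isMaximal_liesOver_finite_quotient (B := B) p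
  have h2P : 2 ∈ P := map_ofNat (algebraMap A B) 2 ▸ (P.mem_of_liesOver p 2).1 h2
  have h20 : (2 : B) ≠ 0 := two_ne_zero
  refine eight_le_mk_units_quotient_squares_of_isFractionRing F P h2P h20 fun hidem ↦ ?_
  obtain rfl | rfl := (Ideal.isIdempotentElem_iff_eq_bot_or_top P (IsNoetherian.noetherian P)).1
    (by rwa [IsIdempotentElem, ← sq])
  · exact h20 h2P
  · exact hP.ne_top rfl

/-- Let `F` be a finite extension of `ℚ₂`. Then `Fˣ/(Fˣ)²` has cardinality at least 8
(equivalently, it is an `𝔽₂`-vector space of dimension at least 3). -/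
theorem card_units_mod_squares_ge_eight (F : Type) [Field F] [Algebra ℚ_[2] F]
    [FiniteDimensional ℚ_[2] F] :
    8 ≤ Cardinal.mk (Fˣ ⧸ (powMonoidHom 2 : Fˣ →* Fˣ).range) := by
  have : Finite (ℤ_[2] ⧸ IsLocalRing.maximalIdeal ℤ_[2]) :=
    .of_equiv (ZMod 2) PadicInt.residueField.symm.toEquiv
  exact card_units_mod_squares_ge_eight_general ℚ_[2] F (IsLocalRing.maximalIdeal ℤ_[2])
    (by simpa using PadicInt.p_nonunit (p := 2))
end
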